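/- If δ1 is a Hamming distortion measure, then for all d2 ∈ ℝ₊, R(0,d2) = R_CR(0,d2) = max{ H(X|Y), R_{Y|X}(d2) }. -/

import Mathlib

open scoped BigOperators Classical

noncomputable section

namespace TWR

/-- Base-2 Shannon entropy of a finitely supported distribution (with the
convention `0 * log 0 = 0`, automatic since `Real.logb 2 0 = 0`). -/
def H2 {α : Type} [Fintype α] (p : α → ℝ) : ℝ :=
  -∑ a, p a * Real.logb 2 (p a)

/-- `p` is a probability mass function. -/
def IsPmf {α : Type} [Fintype α] (p : α → ℝ) : Prop :=
  (∀ a, 0 ≤ p a) ∧ ∑ a, p a = 1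

/-- `W` is a conditional pmf. -/
def IsCondPmf {α β : Type} [Fintype β] (W : α → β → ℝ) : Prop :=
  ∀ a, IsPmf (W a)

/-- Mutual information `I(A;B)` (base 2) of a joint pmf on `α × β`. -/
def MI {α β : Type} [Fintype α] [Fintype β] (p : α × β → ℝ) : ℝ :=
  H2 (fun a => ∑ b, p (a, b)) + H2 (fun b => ∑ a, p (a, b)) - H2 p

/-- Conditional entropy `H(A|B)` of a joint pmf on `α × β`. -/
def condH {α β : Type} [Fintype α] [Fintype β] (p : α × β → ℝ) : ℝ :=
  H2 p - H2 (fun b => ∑ a, p (a, b))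

/-- Conditional mutual information `I(A;C|B)` of a joint pmf on `α × β × γ`,
conditioning on the middle coordinate (`I(A;C|B) = H(A,B)+H(B,C)-H(A,B,C)-H(B)`). -/
def condMI {α β γ : Type} [Fintype α] [Fintype β] [Fintype γ] (p : α × β × γ → ℝ) : ℝ :=
  H2 (fun ab : α × β => ∑ c, p (ab.1, ab.2, c)) +
    H2 (fun bc : β × γ => ∑ a, p (a, bc.1, bc.2)) -
    H2 p - H2 (fun b : β => ∑ a, ∑ c, p (a, b, c))

/-- Markov chain `A − B − C` for a joint pmf on `α × β × γ`. -/
def Markov {α β γ : Type} [Fintype α] [Fintype β] [Fintype γ] (p : α × β × γ → ℝ) : Prop :=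
  ∀ a b c, p (a, b, c) * (∑ a', ∑ c', p (a', b, c')) =
    (∑ c', p (a, b, c')) * (∑ a', p (a', b, c))

variable {𝒳 𝒴 Xh Yh 𝒲 𝒰 𝒱 : Type}
variable [Fintype 𝒳] [Fintype 𝒴] [Fintype Xh] [Fintype Yh]
variable [Fintype 𝒲] [Fintype 𝒰] [Fintype 𝒱]

/-- The i.i.d. block source. -/
def iid (q : 𝒳 × 𝒴 → ℝ) (n : ℕ) : (Fin n → 𝒳) × (Fin n → 𝒴) → ℝ :=
  fun xy => ∏ i, q (xy.1 i, xy.2 i)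

/-- Average distortion at receiver 1 of the RD code `(f, g1, ·)`. -/
def Delta1 (q : 𝒳 × 𝒴 → ℝ) (δ1 : 𝒳 → Xh → ℝ) {n m : ℕ}
    (f : (Fin n → 𝒳) × (Fin n → 𝒴) → Fin m)
    (g1 : Fin m × (Fin n → 𝒴) → Fin n → Xh) : ℝ :=
  ∑ xy : (Fin n → 𝒳) × (Fin n → 𝒴),
    iid q n xy * ((n : ℝ)⁻¹ * ∑ i, δ1 (xy.1 i) (g1 (f xy, xy.2) i))

/-- Average distortion at receiver 2 of the RD code `(f, ·, g2)`. -/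
def Delta2 (q : 𝒳 × 𝒴 → ℝ) (δ2 : 𝒴 → Yh → ℝ) {n m : ℕ}
    (f : (Fin n → 𝒳) × (Fin n → 𝒴) → Fin m)
    (g2 : Fin m × (Fin n → 𝒳) → Fin n → Yh) : ℝ :=
  ∑ xy : (Fin n → 𝒳) × (Fin n → 𝒴),
    iid q n xy * ((n : ℝ)⁻¹ * ∑ i, δ2 (xy.2 i) (g2 (f xy, xy.1) i))

/-- `r` is a `(d1,d2)`-achievable rate (source coding). -/
def RDAchievable (q : 𝒳 × 𝒴 → ℝ) (δ1 : 𝒳 → Xh → ℝ) (δ2 : 𝒴 → Yh → ℝ)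
    (d1 d2 r : ℝ) : Prop :=
  ∀ ε > (0 : ℝ), ∃ (n m : ℕ) (f : (Fin n → 𝒳) × (Fin n → 𝒴) → Fin m)
    (g1 : Fin m × (Fin n → 𝒴) → Fin n → Xh)
    (g2 : Fin m × (Fin n → 𝒳) → Fin n → Yh),
    0 < n ∧ Real.logb 2 m / n ≤ r + ε ∧
    Delta1 q δ1 f g1 ≤ d1 + ε ∧ Delta2 q δ2 f g2 ≤ d2 + ε

/-- The rate-distortion function `R(d1,d2)`. -/
def RD (q : 𝒳 × 𝒴 → ℝ) (δ1 : 𝒳 → Xh → ℝ) (δ2 : 𝒴 → Yh → ℝ) (d1 d2 : ℝ) : ℝ :=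
  sInf {r : ℝ | 0 ≤ r ∧ RDAchievable q δ1 δ2 d1 d2 r}

/-- `r` is `(d1,d2)`-achievable with common reconstructions. -/
def CRAchievable (q : 𝒳 × 𝒴 → ℝ) (δ1 : 𝒳 → Xh → ℝ) (δ2 : 𝒴 → Yh → ℝ)
    (d1 d2 r : ℝ) : Prop :=
  ∀ ε > (0 : ℝ), ∃ (n m : ℕ) (f : (Fin n → 𝒳) × (Fin n → 𝒴) → Fin m)
    (g1 : Fin m × (Fin n → 𝒴) → Fin n → Xh)
    (g2 : Fin m × (Fin n → 𝒳) → Fin n → Yh)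
    (φ1 : Fin m × (Fin n → 𝒴) → Fin n → Yh)
    (φ2 : Fin m × (Fin n → 𝒳) → Fin n → Xh),
    0 < n ∧ Real.logb 2 m / n ≤ r + ε ∧
    Delta1 q δ1 f g1 ≤ d1 + ε ∧ Delta2 q δ2 f g2 ≤ d2 + ε ∧
    (∑ xy : (Fin n → 𝒳) × (Fin n → 𝒴),
      if φ2 (f xy, xy.1) = g1 (f xy, xy.2) then 0 else iid q n xy) ≤ ε ∧
    (∑ xy : (Fin n → 𝒳) × (Fin n → 𝒴),
      if φ1 (f xy, xy.2) = g2 (f xy, xy.1) then 0 else iid q n xy) ≤ ε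

/-- The common-reconstruction rate-distortion function `R_CR(d1,d2)`. -/
def CRRD (q : 𝒳 × 𝒴 → ℝ) (δ1 : 𝒳 → Xh → ℝ) (δ2 : 𝒴 → Yh → ℝ) (d1 d2 : ℝ) : ℝ :=
  sInf {r : ℝ | 0 ≤ r ∧ CRAchievable q δ1 δ2 d1 d2 r}

/-- The conditional rate-distortion function `R_{X|Y}(d1)`. -/
def condRD (q : 𝒳 × 𝒴 → ℝ) (δ1 : 𝒳 → Xh → ℝ) (d1 : ℝ) : ℝ :=
  sInf {r : ℝ | ∃ W : 𝒳 × 𝒴 → Xh → ℝ, IsCondPmf W ∧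
    (∑ x, ∑ y, ∑ xh, q (x, y) * W (x, y) xh * δ1 x xh) ≤ d1 ∧
    r = condMI (fun t : 𝒳 × 𝒴 × Xh => q (t.1, t.2.1) * W (t.1, t.2.1) t.2.2)}

/-- Swap the two components of a joint source. -/
def swap (q : 𝒳 × 𝒴 → ℝ) : 𝒴 × 𝒳 → ℝ := fun t => q (t.2, t.1)

/-- The marginal rate-distortion function `R_X(d)`. -/
def margRD (qX : 𝒳 → ℝ) (δ1 : 𝒳 → Xh → ℝ) (d1 : ℝ) : ℝ :=
  sInf {r : ℝ | ∃ W : 𝒳 → Xh → ℝ, IsCondPmf W ∧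
    (∑ x, ∑ xh, qX x * W x xh * δ1 x xh) ≤ d1 ∧
    r = MI (fun t : 𝒳 × Xh => qX t.1 * W t.1 t.2)}

def margX (q : 𝒳 × 𝒴 → ℝ) : 𝒳 → ℝ := fun x => ∑ y, q (x, y)
def margY (q : 𝒳 × 𝒴 → ℝ) : 𝒴 → ℝ := fun y => ∑ x, q (x, y)

/-- The joint rate-distortion function `R_{XY}(d1,d2)`. -/
def jointRD (q : 𝒳 × 𝒴 → ℝ) (δ1 : 𝒳 → Xh → ℝ) (δ2 : 𝒴 → Yh → ℝ) (d1 d2 : ℝ) : ℝ :=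
  sInf {r : ℝ | ∃ W : 𝒳 × 𝒴 → Xh × Yh → ℝ, IsCondPmf W ∧
    (∑ xy : 𝒳 × 𝒴, ∑ z : Xh × Yh, q xy * W xy z * δ1 xy.1 z.1) ≤ d1 ∧
    (∑ xy : 𝒳 × 𝒴, ∑ z : Xh × Yh, q xy * W xy z * δ2 xy.2 z.2) ≤ d2 ∧
    r = MI (fun t : (𝒳 × 𝒴) × (Xh × Yh) => q t.1 * W t.1 t.2)}

/-- The Wyner–Ziv rate-distortion function `R^{WZ}_{X|Y}(d1)`
(with auxiliary alphabet of cardinality `|𝒳| + 1`). -/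
def wzRD (q : 𝒳 × 𝒴 → ℝ) (δ1 : 𝒳 → Xh → ℝ) (d1 : ℝ) : ℝ :=
  sInf {r : ℝ | ∃ p : Fin (Fintype.card 𝒳 + 1) × 𝒳 × 𝒴 → ℝ, IsPmf p ∧
    (∀ x y, (∑ a, p (a, x, y)) = q (x, y)) ∧ Markov p ∧
    (∃ π1 : Fin (Fintype.card 𝒳 + 1) × 𝒴 → Xh,
      (∑ a, ∑ x, ∑ y, p (a, x, y) * δ1 x (π1 (a, y))) ≤ d1) ∧
    r = condMI (fun t : 𝒳 × 𝒴 × Fin (Fintype.card 𝒳 + 1) => p (t.2.2, t.1, t.2.1))}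

/-- The set over which the single-letter CR formula
`max{I(X;X̂,Ŷ|Y), I(Y;X̂,Ŷ|X)}` is minimised. -/
def crFormulaSet (q : 𝒳 × 𝒴 → ℝ) (δ1 : 𝒳 → Xh → ℝ) (δ2 : 𝒴 → Yh → ℝ)
    (d1 d2 : ℝ) : Set ℝ :=
  {r : ℝ | ∃ W : 𝒳 × 𝒴 → Xh × Yh → ℝ, IsCondPmf W ∧
    (∑ x, ∑ y, ∑ z : Xh × Yh, q (x, y) * W (x, y) z * δ1 x z.1) ≤ d1 ∧
    (∑ x, ∑ y, ∑ z : Xh × Yh, q (x, y) * W (x, y) z * δ2 y z.2) ≤ d2 ∧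
    r = max
      (condMI (fun t : 𝒳 × 𝒴 × (Xh × Yh) => q (t.1, t.2.1) * W (t.1, t.2.1) t.2.2))
      (condMI (fun t : 𝒴 × 𝒳 × (Xh × Yh) => q (t.2.1, t.1) * W (t.2.1, t.1) t.2.2))}

/-- Joint law of source blocks and channel outputs for a JSC encoder. -/
def jscP (q : 𝒳 × 𝒴 → ℝ) (qUV : 𝒲 → 𝒰 × 𝒱 → ℝ) {n m : ℕ}
    (f : (Fin n → 𝒳) × (Fin n → 𝒴) → Fin m → 𝒲)
    (x : Fin n → 𝒳) (y : Fin n → 𝒴) (u : Fin m → 𝒰) (v : Fin m → 𝒱) : ℝ :=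
  (∏ i, q (x i, y i)) * ∏ j, qUV (f (x, y) j) (u j, v j)

/-- `(d1,d2)` is achievable by joint source-channel coding with source rate `κs`
and channel rate `κc` (bandwidth expansion `κc/κs`). -/
def JSCAchievable (q : 𝒳 × 𝒴 → ℝ) (qUV : 𝒲 → 𝒰 × 𝒱 → ℝ)
    (δ1 : 𝒳 → Xh → ℝ) (δ2 : 𝒴 → Yh → ℝ) (κs κc d1 d2 : ℝ) : Prop :=
  ∀ ε > (0 : ℝ), ∃ (t n m : ℕ) (f : (Fin n → 𝒳) × (Fin n → 𝒴) → Fin m → 𝒲)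
    (g1 : (Fin m → 𝒰) × (Fin n → 𝒴) → Fin n → Xh)
    (g2 : (Fin m → 𝒱) × (Fin n → 𝒳) → Fin n → Yh),
    0 < t ∧ (n : ℝ) = κs * t ∧ (m : ℝ) = κc * t ∧
    (∑ x : Fin n → 𝒳, ∑ y : Fin n → 𝒴, ∑ u : Fin m → 𝒰, ∑ v : Fin m → 𝒱,
      jscP q qUV f x y u v * ((n : ℝ)⁻¹ * ∑ i, δ1 (x i) (g1 (u, y) i))) ≤ d1 + ε ∧
    (∑ x : Fin n → 𝒳, ∑ y : Fin n → 𝒴, ∑ u : Fin m → 𝒰, ∑ v : Fin m → 𝒱,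
      jscP q qUV f x y u v * ((n : ℝ)⁻¹ * ∑ i, δ2 (y i) (g2 (v, x) i))) ≤ d2 + ε

/-- `(d1,d2)` is achievable by joint source-channel coding with common
reconstructions, source rate `κs` and channel rate `κc`. -/
def CRJSCAchievable (q : 𝒳 × 𝒴 → ℝ) (qUV : 𝒲 → 𝒰 × 𝒱 → ℝ)
    (δ1 : 𝒳 → Xh → ℝ) (δ2 : 𝒴 → Yh → ℝ) (κs κc d1 d2 : ℝ) : Prop :=
  ∀ ε > (0 : ℝ), ∃ (t n m : ℕ) (f : (Fin n → 𝒳) × (Fin n → 𝒴) → Fin m → 𝒲)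
    (g1 : (Fin m → 𝒰) × (Fin n → 𝒴) → Fin n → Xh)
    (g2 : (Fin m → 𝒱) × (Fin n → 𝒳) → Fin n → Yh)
    (φ1 : (Fin m → 𝒰) × (Fin n → 𝒴) → Fin n → Yh)
    (φ2 : (Fin m → 𝒱) × (Fin n → 𝒳) → Fin n → Xh),
    0 < t ∧ (n : ℝ) = κs * t ∧ (m : ℝ) = κc * t ∧
    (∑ x : Fin n → 𝒳, ∑ y : Fin n → 𝒴, ∑ u : Fin m → 𝒰, ∑ v : Fin m → 𝒱,
      jscP q qUV f x y u v * ((n : ℝ)⁻¹ * ∑ i, δ1 (x i) (g1 (u, y) i))) ≤ d1 + ε ∧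
    (∑ x : Fin n → 𝒳, ∑ y : Fin n → 𝒴, ∑ u : Fin m → 𝒰, ∑ v : Fin m → 𝒱,
      jscP q qUV f x y u v * ((n : ℝ)⁻¹ * ∑ i, δ2 (y i) (g2 (v, x) i))) ≤ d2 + ε ∧
    (∑ x : Fin n → 𝒳, ∑ y : Fin n → 𝒴, ∑ u : Fin m → 𝒰, ∑ v : Fin m → 𝒱,
      if φ2 (v, x) = g1 (u, y) then 0 else jscP q qUV f x y u v) ≤ ε ∧
    (∑ x : Fin n → 𝒳, ∑ y : Fin n → 𝒴, ∑ u : Fin m → 𝒰, ∑ v : Fin m → 𝒱,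
      if φ1 (u, y) = g2 (v, x) then 0 else jscP q qUV f x y u v) ≤ ε

/-- `I(W;U)` under the joint law `pW · qUV` (U-marginal of the broadcast channel). -/
def chMIU (qUV : 𝒲 → 𝒰 × 𝒱 → ℝ) (pW : 𝒲 → ℝ) : ℝ :=
  MI (fun t : 𝒲 × 𝒰 => pW t.1 * ∑ v, qUV t.1 (t.2, v))

/-- `I(W;V)` under the joint law `pW · qUV` (V-marginal of the broadcast channel). -/
def chMIV (qUV : 𝒲 → 𝒰 × 𝒱 → ℝ) (pW : 𝒲 → ℝ) : ℝ :=
  MI (fun t : 𝒲 × 𝒱 => pW t.1 * ∑ u, qUV t.1 (u, t.2))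

/-- The doubly symmetric binary source with crossover probability `ρ`. -/
def dsbs (ρ : ℝ) : Bool × Bool → ℝ :=
  fun t => if t.1 = t.2 then (1 - ρ) / 2 else ρ / 2

/-- The Hamming distortion measure. -/
def dHam {α : Type} : α → α → ℝ := fun a b => if a = b then 0 else 1

/-- The binary entropy function (base 2). -/
def binEnt (x : ℝ) : ℝ := -(x * Real.logb 2 x) - (1 - x) * Real.logb 2 (1 - x)

/-- A difference distortion measure built from a per-letter function of the
(modular) difference. -/
def diffD {l : ℕ} (δ : Fin l → ℝ) : Fin l → Fin l → ℝ := fun a b => δ (a - b)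

/-- Capacity of the modulo-additive channel with noise `pN` and input
distortion constraint `d`. -/
def Cadd {l : ℕ} (δ : Fin l → ℝ) (d : ℝ) (pN : Fin l → ℝ) : ℝ :=
  sSup {r : ℝ | ∃ pW : Fin l → ℝ, IsPmf pW ∧ (∑ w, pW w * δ w) ≤ d ∧
    r = MI (fun t : Fin l × Fin l => pW t.1 * pN (t.2 - t.1))}

/-- The minimax (worst-noise) capacity under distortion constraint `d`. -/
def Cworst {l : ℕ} (δ : Fin l → ℝ) (d : ℝ) : ℝ :=
  sInf {r : ℝ | ∃ pN : Fin l → ℝ, IsPmf pN ∧ (∑ x, pN x * δ x) ≤ d ∧ r = Cadd δ d pN}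

/-- Wyner's common information `K(X;Y)` (auxiliary alphabet of size 4). -/
def wynerK (q : 𝒳 × 𝒴 → ℝ) : ℝ :=
  sInf {r : ℝ | ∃ W : 𝒳 × 𝒴 → Fin 4 → ℝ, IsCondPmf W ∧
    Markov (fun t : 𝒳 × Fin 4 × 𝒴 => q (t.1, t.2.2) * W (t.1, t.2.2) t.2.1) ∧
    r = MI (fun t : (𝒳 × 𝒴) × Fin 4 => q t.1 * W t.1 t.2)}

/-- The one-description (Kimura–Uyematsu) upper bound `R_U*(d1,d2)`. -/
def oneDescUB (q : 𝒳 × 𝒴 → ℝ) (δ1 : 𝒳 → Xh → ℝ) (δ2 : 𝒴 → Yh → ℝ) (d1 d2 : ℝ) : ℝ :=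
  sInf {r : ℝ | ∃ W : 𝒳 × 𝒴 → Fin (Fintype.card 𝒳 * Fintype.card 𝒴 + 2) → ℝ,
    IsCondPmf W ∧
    (∃ π1 : Fin (Fintype.card 𝒳 * Fintype.card 𝒴 + 2) × 𝒴 → Xh,
      (∑ x, ∑ y, ∑ c, q (x, y) * W (x, y) c * δ1 x (π1 (c, y))) ≤ d1) ∧
    (∃ π2 : Fin (Fintype.card 𝒳 * Fintype.card 𝒴 + 2) × 𝒳 → Yh,
      (∑ x, ∑ y, ∑ c, q (x, y) * W (x, y) c * δ2 y (π2 (c, x))) ≤ d2) ∧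
    r = max
      (condMI (fun t : 𝒳 × 𝒴 × Fin (Fintype.card 𝒳 * Fintype.card 𝒴 + 2) =>
        q (t.1, t.2.1) * W (t.1, t.2.1) t.2.2))
      (condMI (fun t : 𝒴 × 𝒳 × Fin (Fintype.card 𝒳 * Fintype.card 𝒴 + 2) =>
        q (t.2.1, t.1) * W (t.2.1, t.1) t.2.2))}

end TWR

/-!
*Converse.* Any decoder of `X` from `(M, Y)` gives a predictor of `X` with side information `Y`
whose logarithmic loss is at most the length of `M` plus the cost of the wrong letters, and `n *
H(X|Y)` is the least possible logarithmic loss. For the lossy receiver, averaging the joint law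
of the letters over time turns a block code into a single-letter channel, and conditional mutual
information is again bounded through logarithmic loss.

*Achievability.* The message is the sum `h x + k (x, y)` in `Fin m` of a random hash of `x` and
the index of a codeword for `y` in a random codebook depending on `x`. The receiver knowing `x`
subtracts `h x` and finds the codeword. The receiver knowing `y` decodes `x` by random binning,
the offset `k (x, y)` being harmless because the hash values of distinct blocks stay independent
and uniform, and then subtracts `h x` too. So both terms share one message, whose rate is their
maximum, and both receivers know both reconstructions.
-/

namespace TWR

open Filter Topology

section Probability

/-- The law of independent coordinates, the `i`-th one distributed according to `p i`. -/
def piPmf {α ι : Type} [Fintype ι] (p : ι → α → ℝ) : (ι → α) → ℝ :=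
  fun a => ∏ i, p i (a i)

variable {α ι : Type} [Fintype α] {p : α → ℝ}

/-- The mass that the weight function `p` gives to the event `E`. -/
def prob (p : α → ℝ) (E : α → Prop) : ℝ :=
  ∑ a, if E a then p a else 0

theorem prob_nonneg (hp : ∀ a, 0 ≤ p a) (E : α → Prop) : 0 ≤ prob p E :=
  Finset.sum_nonneg fun a _ => by split_ifs <;> simp [hp a]

theorem prob_eq_sum_mul (p : α → ℝ) (E : α → Prop) :
    prob p E = ∑ a, p a * if E a then 1 else 0 := by
  simp only [prob, mul_ite, mul_one, mul_zero]

theorem prob_le_add {E A B : α → Prop} (hp : ∀ a, 0 ≤ p a)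
    (h : ∀ a, 0 < p a → E a → A a ∨ B a) : prob p E ≤ prob p A + prob p B := by
  rw [prob, prob, prob, ← Finset.sum_add_distrib]
  refine Finset.sum_le_sum fun a _ => ?_
  rcases (hp a).eq_or_lt with h0 | h0
  · simp [← h0]
  · have := h a h0
    split_ifs <;> first | linarith | tauto

theorem prob_mono {E A : α → Prop} (hp : ∀ a, 0 ≤ p a) (h : ∀ a, 0 < p a → E a → A a) :
    prob p E ≤ prob p A :=
  (prob_le_add hp fun a h0 hE => Or.inl (h a h0 hE)).trans_eq <|
    show _ + prob p (fun _ => False) = _ by simp [prob]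

theorem IsPmf.prob_not (hp : IsPmf p) (E : α → Prop) :
    prob p (fun a => ¬ E a) = 1 - prob p E := by
  rw [← hp.2, eq_sub_iff_add_eq, prob, prob, ← Finset.sum_add_distrib]
  exact Finset.sum_congr rfl fun a _ => by split_ifs <;> simp

theorem IsPmf.prob_le_one (hp : IsPmf p) (E : α → Prop) : prob p E ≤ 1 := by
  linarith [hp.prob_not E, prob_nonneg hp.1 fun a => ¬ E a]

theorem IsPmf.nonempty (hp : IsPmf p) : Nonempty α := by
  by_contra h
  simpa [not_nonempty_iff.1 h] using hp.2

theorem IsPmf.exists_le_of_sum_mul_le (hp : IsPmf p) {F : α → ℝ} {c : ℝ}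
    (h : ∑ a, p a * F a ≤ c) : ∃ a, F a ≤ c := by
  by_contra! hF
  obtain ⟨a, -, ha⟩ := Finset.exists_lt_of_sum_lt (f := fun _ : α => (0 : ℝ)) (g := p)
    (s := Finset.univ) (by simp [hp.2])
  refine h.not_gt ?_
  calc c = ∑ a, p a * c := by rw [← Finset.sum_mul, hp.2, one_mul]
    _ < ∑ a, p a * F a :=
        Finset.sum_lt_sum (fun a _ => mul_le_mul_of_nonneg_left (hF a).le (hp.1 a))
          ⟨a, Finset.mem_univ a, mul_lt_mul_of_pos_left (hF a) ha⟩

theorem IsPmf.sum_mul_average_le (hp : IsPmf p) {n : ℕ} (hn : 0 < n) {F : α → Fin n → ℝ}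
    {d B : ℝ} (hF : ∀ a i, F a i ≤ d + B) :
    ∑ a, p a * ((n : ℝ)⁻¹ * ∑ i, F a i) ≤ d + B * prob p (fun a => n * d < ∑ i, F a i) := by
  have hn' : (0 : ℝ) < n := Nat.cast_pos.2 hn
  have average_le (a) : (n : ℝ)⁻¹ * ∑ i, F a i ≤
      d + B * if (n : ℝ) * d < ∑ i, F a i then 1 else 0 := by
    rw [inv_mul_le_iff₀ hn']
    split_ifs with h
    · simpa [mul_add] using Finset.sum_le_sum fun i (_ : i ∈ Finset.univ) => hF a i
    · simpa using h
  calc _ ≤ ∑ a, p a * (d + B * if (n : ℝ) * d < ∑ i, F a i then 1 else 0) :=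
        Finset.sum_le_sum fun a _ => mul_le_mul_of_nonneg_left (average_le a) (hp.1 a)
    _ = (∑ a, p a) * d + B * ∑ a, p a * if (n : ℝ) * d < ∑ i, F a i then 1 else 0 := by
        rw [Finset.sum_mul, Finset.mul_sum, ← Finset.sum_add_distrib]
        exact Finset.sum_congr rfl fun a _ => by ring
    _ = _ := by rw [hp.2, one_mul, prob_eq_sum_mul]

variable [Fintype ι] [DecidableEq ι]

theorem IsPmf.piPmf {p : ι → α → ℝ} (hp : ∀ i, IsPmf (p i)) : IsPmf (piPmf p) :=
  ⟨fun a => Finset.prod_nonneg fun i _ => (hp i).1 (a i), by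
    simp only [TWR.piPmf, ← Fintype.prod_sum, (hp _).2, Finset.prod_const_one]⟩

theorem prob_piPmf_forall (p : ι → α → ℝ) (E : α → Prop) :
    prob (piPmf p) (fun a => ∀ i, E (a i)) = ∏ i, prob (p i) E := by
  simp only [prob, Fintype.prod_sum]
  refine Finset.sum_congr rfl fun a _ => ?_
  simp only [piPmf, Finset.prod_ite_zero, Finset.mem_univ, true_imp_iff]
  congr

theorem sum_piPmf_mul_apply {p : ι → α → ℝ} (hp : ∀ i, IsPmf (p i)) (i : ι) (F : α → ℝ) :
    ∑ a, piPmf p a * F (a i) = ∑ a, p i a * F a := by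
  calc _ = ∑ a : ι → α, ∏ j, (p j (a j) * if j = i then F (a j) else 1) := by
        simp only [piPmf, Finset.prod_mul_distrib, Finset.prod_ite_eq', Finset.mem_univ, if_true]
    _ = ∏ j, ∑ a, (p j a * if j = i then F a else 1) :=
        (Fintype.prod_sum fun j a => p j a * if j = i then F a else 1).symm
    _ = ∑ a, p i a * F a := by
        rw [Finset.prod_eq_single i _ (by simp)]
        · simp
        · intro j _ hj
          simp [hj, (hp j).2]

/-! ### The weak law of large numbers, by Chernoff's bound -/

theorem IsPmf.exists_sum_mul_exp_lt_one (hp : IsPmf p) {G : α → ℝ} (hG : ∑ a, p a * G a < 0) :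
    ∃ s > 0, ∑ a, p a * Real.exp (s * G a) < 1 := by
  have hderiv : HasDerivAt (fun s => ∑ a, p a * Real.exp (s * G a)) (∑ a, p a * G a) 0 := by
    refine HasDerivAt.fun_sum fun a _ => ?_
    simpa using (((hasDerivAt_id (0 : ℝ)).mul_const (G a)).exp).const_mul (p a)
  have hslope : ∀ᶠ s in 𝓝[>] (0 : ℝ), slope (fun s => ∑ a, p a * Real.exp (s * G a)) 0 s < 0 :=
    ((hasDerivAt_iff_tendsto_slope.1 hderiv).eventually_lt_const hG).filter_mono
      (nhdsWithin_mono _ fun s hs => ne_of_gt hs)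
  obtain ⟨s, hs, hs0 : 0 < s⟩ := (hslope.and self_mem_nhdsWithin).exists
  refine ⟨s, hs0, ?_⟩
  simpa [slope_def_field, div_neg_iff, hs0, hs0.not_gt, hp.2] using hs

theorem prob_piPmf_sum_pos_le (hp : ∀ a, 0 ≤ p a) (G : α → ℝ) (n : ℕ) {s : ℝ} (hs : 0 < s) :
    prob (piPmf fun _ : Fin n => p) (fun a => 0 < ∑ i, G (a i)) ≤
      (∑ a, p a * Real.exp (s * G a)) ^ n := by
  have indicator_le (a : Fin n → α) : (if 0 < ∑ i, G (a i) then (1 : ℝ) else 0) ≤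
      ∏ i, Real.exp (s * G (a i)) := by
    rw [← Real.exp_sum, ← Finset.mul_sum]
    split_ifs with h
    · exact Real.one_le_exp (mul_pos hs h).le
    · exact (Real.exp_pos _).le
  rw [prob_eq_sum_mul, Fintype.sum_pow]
  refine Finset.sum_le_sum fun a _ => ?_
  rw [Finset.prod_mul_distrib]
  exact mul_le_mul_of_nonneg_left (indicator_le a) (Finset.prod_nonneg fun i _ => hp (a i))

theorem IsPmf.tendsto_prob_piPmf_lt_sum (hp : IsPmf p) {F : α → ℝ} {E : ℝ}
    (hE : ∑ a, p a * F a < E) :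
    Tendsto (fun n : ℕ => prob (TWR.piPmf fun _ : Fin n => p) (fun a => n * E < ∑ i, F (a i)))
      atTop (𝓝 0) := by
  have hG : ∑ a, p a * (F a - E) < 0 := by
    simpa [mul_sub, ← Finset.sum_mul, hp.2] using hE
  obtain ⟨s, hs, hlt⟩ := hp.exists_sum_mul_exp_lt_one hG
  have hnonneg : 0 ≤ ∑ a, p a * Real.exp (s * (F a - E)) :=
    Finset.sum_nonneg fun a _ => mul_nonneg (hp.1 a) (Real.exp_pos _).le
  refine squeeze_zero (fun n => prob_nonneg (IsPmf.piPmf fun _ => hp).1 _) (fun n => ?_)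
    (tendsto_pow_atTop_nhds_zero_of_lt_one hnonneg hlt)
  simpa using prob_piPmf_sum_pos_le hp.1 (fun a => F a - E) n hs

end Probability

section Information

variable {α β γ : Type} [Fintype α] {p : α × β → ℝ}

theorem le_margY (hp : ∀ t, 0 ≤ p t) (a : α) (b : β) : p (a, b) ≤ margY p b :=
  Finset.single_le_sum (f := fun a => p (a, b)) (fun a _ => hp (a, b)) (Finset.mem_univ a)

theorem exists_posterior [Nonempty α] (hp : ∀ t, 0 ≤ p t) :
    ∃ V : β → α → ℝ, IsCondPmf V ∧ ∀ a b, margY p b * V b a = p (a, b) := by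
  refine ⟨fun b a => if margY p b = 0 then (Fintype.card α : ℝ)⁻¹ else p (a, b) / margY p b,
    fun b => ?_, fun a b => ?_⟩
  · by_cases h : margY p b = 0
    · simp [IsPmf, h]
    · simp only [IsPmf, h, if_false, ← Finset.sum_div]
      exact ⟨fun a => div_nonneg (hp _) ((hp _).trans (le_margY hp a b)), div_self h⟩
  · by_cases h : margY p b = 0
    · simp [h, le_antisymm (h ▸ le_margY hp a b) (hp _)]
    · simp [h, mul_div_cancel₀]

/-- The joint law of `(A, B, C)` when `(A, B)` has law `p` and `C` is the output of the
channel `W` with input `(A, B)`; this is the law whose `condMI` enters `condRD`. -/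
def jointLaw (p : α × β → ℝ) (W : α × β → γ → ℝ) : α × β × γ → ℝ :=
  fun t => p (t.1, t.2.1) * W (t.1, t.2.1) t.2.2

variable [Fintype β]

theorem IsPmf.margY (hp : IsPmf p) : IsPmf (margY p) :=
  ⟨fun b => Finset.sum_nonneg fun a _ => hp.1 (a, b), by
    simpa only [TWR.margY, ← Fintype.sum_prod_type_right] using hp.2⟩

theorem condH_eq_sum (p : α × β → ℝ) :
    condH p = ∑ t, p t * (Real.logb 2 (margY p t.2) - Real.logb 2 (p t)) := by
  have hmarg : ∑ b, margY p b * Real.logb 2 (margY p b) =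
      ∑ t, p t * Real.logb 2 (margY p t.2) := by
    simp only [Fintype.sum_prod_type_right, margY, Finset.sum_mul]
  change H2 p - H2 (margY p) = _
  rw [H2, H2, hmarg, ← Finset.sum_neg_distrib, sub_neg_eq_add, ← Finset.sum_add_distrib]
  exact Finset.sum_congr rfl fun t _ => by ring

theorem condH_eq_sum_neg_logb {V : β → α → ℝ} (hV : ∀ a b, margY p b * V b a = p (a, b)) :
    condH p = ∑ t, p t * -Real.logb 2 (V t.2 t.1) := by
  rw [condH_eq_sum]
  refine Finset.sum_congr rfl fun ⟨a, b⟩ _ => ?_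
  by_cases h : p (a, b) = 0
  · simp [h]
  · have hmul : margY p b * V b a ≠ 0 := hV a b ▸ h
    rw [← hV a b, Real.logb_mul (left_ne_zero_of_mul hmul) (right_ne_zero_of_mul hmul)]
    ring

theorem condH_nonneg (hp : IsPmf p) : 0 ≤ condH p := by
  obtain ⟨a₀, _⟩ := hp.nonempty
  have : Nonempty α := ⟨a₀⟩
  obtain ⟨V, hV, hVp⟩ := exists_posterior hp.1
  rw [condH_eq_sum_neg_logb hVp]
  refine Finset.sum_nonneg fun t _ => mul_nonneg (hp.1 t) (neg_nonneg.2 ?_)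
  refine Real.logb_nonpos one_lt_two ((hV t.2).1 t.1) ?_
  rw [← (hV t.2).2]
  exact Finset.single_le_sum (fun a _ => (hV t.2).1 a) (Finset.mem_univ t.1)

variable [Fintype γ] {W : α × β → γ → ℝ}

theorem condMI_eq_condH_sub (P : α × β × γ → ℝ) :
    condMI P = condH (fun t : α × β => ∑ c, P (t.1, t.2, c)) - condH P := by
  unfold condMI condH
  ring

theorem sum_jointLaw_mul (p : α × β → ℝ) (W : α × β → γ → ℝ) (F : α × β × γ → ℝ) :
    ∑ t, jointLaw p W t * F t = ∑ t : α × β, p t * ∑ c, W t c * F (t.1, t.2, c) := by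
  simp only [jointLaw, Fintype.sum_prod_type, Finset.mul_sum, mul_assoc]

theorem sum_jointLaw_mul_fst_snd (p : α × β → ℝ) (hW : IsCondPmf W) (F : α × β → ℝ) :
    ∑ t, jointLaw p W t * F (t.1, t.2.1) = ∑ t, p t * F t := by
  simp only [sum_jointLaw_mul, ← Finset.sum_mul, (hW _).2, one_mul]

theorem IsPmf.jointLaw (hp : IsPmf p) (hW : IsCondPmf W) : IsPmf (jointLaw p W) :=
  ⟨fun _ => mul_nonneg (hp.1 _) ((hW _).1 _), by
    simpa [hp.2] using sum_jointLaw_mul_fst_snd p hW fun _ => 1⟩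

theorem condMI_jointLaw (hp : IsPmf p) (hW : IsCondPmf W) {Q : β → γ → ℝ}
    (hQ : ∀ c b, margY p b * Q b c = ∑ a, jointLaw p W (a, b, c)) :
    condMI (jointLaw p W) = ∑ t, jointLaw p W t *
      (Real.logb 2 (W (t.1, t.2.1) t.2.2) - Real.logb 2 (Q t.2.1 t.2.2)) := by
  obtain ⟨a₀, _⟩ := hp.nonempty
  have : Nonempty α := ⟨a₀⟩
  obtain ⟨V, -, hVp⟩ := exists_posterior hp.1
  obtain ⟨U, -, hUp⟩ := exists_posterior (hp.jointLaw hW).1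
  have hmarg : (fun t : α × β => ∑ c, jointLaw p W (t.1, t.2, c)) = p :=
    funext fun t => by simp only [jointLaw, ← Finset.mul_sum, (hW _).2, mul_one]
  rw [condMI_eq_condH_sub, hmarg, condH_eq_sum_neg_logb hVp, condH_eq_sum_neg_logb hUp,
    ← sum_jointLaw_mul_fst_snd p hW, ← Finset.sum_sub_distrib]
  refine Finset.sum_congr rfl fun ⟨a, b, c⟩ _ => ?_
  by_cases h : jointLaw p W (a, b, c) = 0
  · simp [h]
  · -- Bayes' rule: both sides are the joint law divided by the law of `(B, C)`.
    have hbayes : margY p b * V b a * W (a, b) c = margY p b * Q b c * U (b, c) a := by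
      rw [hVp, hQ]
      exact (hUp a (b, c)).symm
    have hne : margY p b * V b a * W (a, b) c ≠ 0 := by rwa [hVp]
    have hne' := hbayes ▸ hne
    have hlog := congrArg (Real.logb 2) hbayes
    simp only [mul_ne_zero_iff] at hne hne'
    obtain ⟨⟨hm, hv⟩, hw⟩ := hne
    obtain ⟨⟨-, hq⟩, hu⟩ := hne'
    rw [Real.logb_mul (mul_ne_zero hm hv) hw, Real.logb_mul hm hv,
      Real.logb_mul (mul_ne_zero hm hq) hu, Real.logb_mul hm hq] at hlog
    rw [← mul_sub]
    congr 1
    linarith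

end Information

theorem exists_eq_jointLaw {α β γ : Type} [Fintype γ] [Nonempty γ] {P : α × β × γ → ℝ}
    (hP : ∀ t, 0 ≤ P t) : ∃ W, IsCondPmf W ∧
      P = jointLaw (fun t => ∑ c, P (t.1, t.2, c)) W := by
  obtain ⟨W, hW, hWP⟩ := exists_posterior (p := fun t : γ × α × β => P (t.2.1, t.2.2, t.1))
    fun t => hP _
  exact ⟨W, hW, funext fun ⟨a, b, c⟩ => (hWP c (a, b)).symm⟩

section Blocks

variable {α β γ : Type} {p : α × β → ℝ} {n : ℕ}

theorem apply_ne_zero_of_iid_ne_zero {ab : (Fin n → α) × (Fin n → β)} (h : iid p n ab ≠ 0)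
    (i : Fin n) : p (ab.1 i, ab.2 i) ≠ 0 :=
  Finset.prod_ne_zero_iff.1 h i (Finset.mem_univ i)

theorem logb_piPmf {P : Fin n → α → ℝ} {a : Fin n → α} (h : ∀ i, P i (a i) ≠ 0) :
    Real.logb 2 (piPmf P a) = ∑ i, Real.logb 2 (P i (a i)) :=
  Real.logb_prod _ _ fun i _ => h i

/-- The memoryless extension of the channel `W` to blocks of length `n`. -/
def blockChannel (W : α × β → γ → ℝ) (n : ℕ) :
    (Fin n → α) × (Fin n → β) → (Fin n → γ) → ℝ :=
  fun ab => piPmf fun i => W (ab.1 i, ab.2 i)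

theorem IsCondPmf.blockChannel [Fintype γ] {W : α × β → γ → ℝ} (hW : IsCondPmf W) (n : ℕ) :
    IsCondPmf (blockChannel W n) :=
  fun _ => .piPmf fun _ => hW _

theorem jointLaw_iid_apply (p : α × β → ℝ) (W : α × β → γ → ℝ)
    (t : (Fin n → α) × (Fin n → β) × (Fin n → γ)) :
    jointLaw (iid p n) (blockChannel W n) t =
      ∏ i, jointLaw p W (t.1 i, t.2.1 i, t.2.2 i) :=
  Finset.prod_mul_distrib.symm

theorem margY_iid [Fintype α] (p : α × β → ℝ) (b : Fin n → β) :
    margY (iid p n) b = ∏ i, margY p (b i) :=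
  (Fintype.prod_sum fun i a => p (a, b i)).symm

variable [Fintype α] [Fintype β]

theorem sum_blocks (F : (Fin n → α × β) → ℝ) :
    ∑ t, F t = ∑ ab : (Fin n → α) × (Fin n → β), F fun i => (ab.1 i, ab.2 i) :=
  ((Equiv.arrowProdEquivProdArrow (Fin n) (fun _ => α) fun _ => β).symm.sum_comp F).symm

theorem prob_iid (p : α × β → ℝ) (E : (Fin n → α × β) → Prop) :
    prob (iid p n) (fun ab => E fun i => (ab.1 i, ab.2 i)) = prob (piPmf fun _ => p) E :=
  (sum_blocks fun t => if E t then piPmf (fun _ => p) t else 0).symm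

theorem prob_iid_swap (p : α × β → ℝ) (n : ℕ)
    (E : (Fin n → β) × (Fin n → α) → Prop) :
    prob (iid (swap p) n) E = prob (iid p n) fun ab => E ab.swap :=
  ((Equiv.prodComm _ _).sum_comp fun ba => if E ba then iid (swap p) n ba else 0).symm

theorem IsPmf.swap (hp : IsPmf p) : IsPmf (swap p) :=
  ⟨fun _ => hp.1 _, ((Equiv.prodComm β α).sum_comp p).trans hp.2⟩

theorem IsPmf.iid (hp : IsPmf p) (n : ℕ) : IsPmf (iid p n) :=
  have hpi : IsPmf (TWR.piPmf fun _ : Fin n => p) := .piPmf fun _ => hp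
  ⟨fun _ => hpi.1 _, (sum_blocks _).symm.trans hpi.2⟩

theorem sum_iid_mul_sum (hp : IsPmf p) (F : α × β → ℝ) :
    ∑ ab, iid p n ab * ∑ i, F (ab.1 i, ab.2 i) = n * ∑ t, p t * F t := by
  calc _ = ∑ t, piPmf (fun _ : Fin n => p) t * ∑ i, F (t i) :=
        (sum_blocks fun t => piPmf (fun _ => p) t * ∑ i, F (t i)).symm
    _ = ∑ i : Fin n, ∑ t, piPmf (fun _ => p) t * F (t i) := by
        simp only [Finset.mul_sum]
        exact Finset.sum_comm
    _ = n * ∑ t, p t * F t := by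
        simp only [sum_piPmf_mul_apply (fun _ => hp), Finset.sum_const, Finset.card_univ,
          Fintype.card_fin, nsmul_eq_mul]

theorem condH_iid (hp : IsPmf p) (n : ℕ) : condH (iid p n) = n * condH p := by
  obtain ⟨a₀, _⟩ := hp.nonempty
  have : Nonempty α := ⟨a₀⟩
  obtain ⟨V, -, hV⟩ := exists_posterior hp.1
  have hVn (a : Fin n → α) (b : Fin n → β) :
      margY (iid p n) b * piPmf (fun i => V (b i)) a = iid p n (a, b) := by
    simp only [margY_iid, piPmf, iid, ← Finset.prod_mul_distrib, hV]
  rw [condH_eq_sum_neg_logb hVn, condH_eq_sum_neg_logb hV, ← sum_iid_mul_sum hp]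
  refine Finset.sum_congr rfl fun ab _ => ?_
  by_cases h : iid p n ab = 0
  · simp [h]
  · rw [logb_piPmf, Finset.sum_neg_distrib]
    intro i
    exact right_ne_zero_of_mul ((hV _ _).trans_ne (apply_ne_zero_of_iid_ne_zero h i))

theorem IsPmf.tendsto_prob_iid_lt_sum (hp : IsPmf p) {F : α × β → ℝ} {E : ℝ}
    (hE : ∑ t, p t * F t < E) :
    Tendsto (fun n => prob (TWR.iid p n) fun ab => n * E < ∑ i, F (ab.1 i, ab.2 i))
      atTop (𝓝 0) := by
  refine (hp.tendsto_prob_piPmf_lt_sum hE).congr fun n => ?_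
  exact (prob_iid p fun t => n * E < ∑ i, F (t i)).symm

variable [Fintype γ] {W : α × β → γ → ℝ}

theorem prob_jointLaw_iid (p : α × β → ℝ) (W : α × β → γ → ℝ)
    (E : (Fin n → α × β × γ) → Prop) :
    prob (jointLaw (iid p n) (blockChannel W n))
        (fun t => E fun i => (t.1 i, t.2.1 i, t.2.2 i)) =
      prob (piPmf fun _ => jointLaw p W) E := by
  rw [← prob_iid]
  refine (Fintype.sum_prod_type _).trans (.trans ?_ (Fintype.sum_prod_type _).symm)
  refine Finset.sum_congr rfl fun a _ => ?_
  rw [sum_blocks]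
  simp only [jointLaw_iid_apply]
  rfl

theorem tendsto_prob_jointLaw_iid_lt_sum (hp : IsPmf p) (hW : IsCondPmf W)
    {F : α × β × γ → ℝ} {E : ℝ} (hE : ∑ t, jointLaw p W t * F t < E) :
    Tendsto (fun n => prob (jointLaw (iid p n) (blockChannel W n))
      fun t => n * E < ∑ i, F (t.1 i, t.2.1 i, t.2.2 i)) atTop (𝓝 0) := by
  refine ((hp.jointLaw hW).tendsto_prob_piPmf_lt_sum hE).congr fun n => ?_
  exact (prob_jointLaw_iid p W fun t => n * E < ∑ i, F (t i)).symm

end Blocks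

section Converse

theorem IsPmf.sum_mul_logb_sub_le {α : Type} [Fintype α] {p U : α → ℝ} (hp : IsPmf p)
    (hU : ∀ a, 0 ≤ U a) (hpU : ∀ a, p a ≠ 0 → U a ≠ 0) :
    ∑ a, p a * (Real.logb 2 (U a) - Real.logb 2 (p a)) ≤ Real.logb 2 (∑ a, U a) := by
  set S := ∑ a, U a
  have hS : 0 < S := by
    obtain ⟨a, -, ha⟩ := Finset.exists_ne_zero_of_sum_ne_zero (hp.2.trans_ne one_ne_zero)
    exact ((hU a).lt_of_ne' (hpU a ha)).trans_le
      (Finset.single_le_sum (fun a _ => hU a) (Finset.mem_univ a))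
  have term_le (a : α) :
      p a * (Real.log (U a) - Real.log (p a)) ≤ p a * Real.log S + (U a / S - p a) := by
    rcases (hp.1 a).eq_or_lt with h0 | h0
    · simpa [← h0] using div_nonneg (hU a) hS.le
    · have hUa : 0 < U a := (hU a).lt_of_ne' (hpU a h0.ne')
      have hlog := Real.log_le_sub_one_of_pos (div_pos hUa (mul_pos hS h0))
      rw [Real.log_div hUa.ne' (mul_pos hS h0).ne', Real.log_mul hS.ne' h0.ne'] at hlog
      have hmul := mul_le_mul_of_nonneg_left hlog h0.le
      have hcancel : p a * (U a / (S * p a) - 1) = U a / S - p a := by field_simp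
      linarith
  have hsum := Finset.sum_le_sum fun a (_ : a ∈ Finset.univ) => term_le a
  rw [Finset.sum_add_distrib, Finset.sum_sub_distrib, ← Finset.sum_mul, ← Finset.sum_div, hp.2,
    div_self hS.ne', sub_self, add_zero, one_mul] at hsum
  simp only [Real.logb, ← sub_div, ← mul_div_assoc, ← Finset.sum_div]
  exact div_le_div_of_nonneg_right hsum (Real.log_nonneg one_le_two)

variable {α β γ ℳ : Type} [Fintype α] [Fintype β] [Fintype ℳ] {p : α × β → ℝ} {n : ℕ}

theorem condH_le_logb_card_add (hp : IsPmf p) (f : α × β → ℳ) {V : ℳ × β → α → ℝ}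
    (hV : IsCondPmf V) (hpV : ∀ t, p t ≠ 0 → V (f t, t.2) t.1 ≠ 0) :
    condH p ≤ Real.logb 2 (Fintype.card ℳ) + ∑ t, p t * -Real.logb 2 (V (f t, t.2) t.1) := by
  set U : α × β → ℝ := fun t => margY p t.2 * V (f t, t.2) t.1
  have marg_ne (t : α × β) (ht : p t ≠ 0) : margY p t.2 ≠ 0 :=
    (((hp.1 t).lt_of_ne' ht).trans_le (le_margY hp.1 t.1 t.2)).ne'
  have hU (t) : 0 ≤ U t := mul_nonneg (hp.margY.1 _) ((hV _).1 _)
  have hpU (t) (ht : p t ≠ 0) : U t ≠ 0 := mul_ne_zero (marg_ne t ht) (hpV t ht)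
  have sum_U_le : ∑ t, U t ≤ Fintype.card ℳ := by
    calc ∑ t, U t ≤ ∑ t : α × β, ∑ m, margY p t.2 * V (m, t.2) t.1 :=
          Finset.sum_le_sum fun t _ => Finset.single_le_sum
            (f := fun m => margY p t.2 * V (m, t.2) t.1)
            (fun m _ => mul_nonneg (hp.margY.1 _) ((hV _).1 _)) (Finset.mem_univ (f t))
      _ = ∑ m, ∑ b, margY p b * ∑ a, V (m, b) a := by
          rw [Finset.sum_comm]
          simp only [Fintype.sum_prod_type_right, Finset.mul_sum]
      _ = Fintype.card ℳ := by simp [(hV _).2, hp.margY.2]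
  have sum_U_pos : 0 < ∑ t, U t := by
    obtain ⟨t, -, ht⟩ := Finset.exists_ne_zero_of_sum_ne_zero (hp.2.trans_ne one_ne_zero)
    exact Finset.sum_pos' (fun t _ => hU t) ⟨t, Finset.mem_univ t, (hU t).lt_of_ne' (hpU t ht)⟩
  calc condH p = ∑ t, p t * (Real.logb 2 (U t) - Real.logb 2 (p t)) +
        ∑ t, p t * -Real.logb 2 (V (f t, t.2) t.1) := by
        rw [condH_eq_sum, ← Finset.sum_add_distrib]
        refine Finset.sum_congr rfl fun t _ => ?_
        by_cases ht : p t = 0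
        · simp [ht]
        · rw [Real.logb_mul (marg_ne t ht) (hpV t ht)]
          ring
    _ ≤ _ := add_le_add_left ((hp.sum_mul_logb_sub_le hU hpU).trans
        (Real.logb_le_logb_of_le one_lt_two sum_U_pos sum_U_le)) _

theorem mul_condH_le_of_code (hp : IsPmf p) (f : (Fin n → α) × (Fin n → β) → ℳ)
    (g : ℳ × (Fin n → β) → Fin n → γ) {V : β × γ → α → ℝ} (hV : IsCondPmf V)
    (hpV : ∀ ab, iid p n ab ≠ 0 → ∀ i, V (ab.2 i, g (f ab, ab.2) i) (ab.1 i) ≠ 0) :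
    n * condH p ≤ Real.logb 2 (Fintype.card ℳ) +
      ∑ ab, iid p n ab * ∑ i, -Real.logb 2 (V (ab.2 i, g (f ab, ab.2) i) (ab.1 i)) := by
  rw [← condH_iid hp]
  refine (condH_le_logb_card_add (hp.iid n) f (V := fun mb => piPmf fun i => V (mb.2 i, g mb i))
    (fun _ => .piPmf fun _ => hV _)
    fun ab hab => Finset.prod_ne_zero_iff.2 fun i _ => hpV ab hab i).trans_eq ?_
  refine congrArg _ (Finset.sum_congr rfl fun ab _ => ?_)
  by_cases h : iid p n ab = 0
  · simp [h]
  · rw [logb_piPmf (hpV ab h), Finset.sum_neg_distrib]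

/-! ### The lossless receiver -/

theorem exists_condPmf_neg_logb_le (α : Type) [Fintype α] [Nonempty α] {δ : ℝ} (hδ : 0 < δ)
    (hδ1 : δ < 1) : ∃ V : α → α → ℝ, IsCondPmf V ∧ ∀ a c, V c a ≠ 0 ∧
      -Real.logb 2 (V c a) ≤
        -Real.logb 2 (1 - δ) + dHam a c * Real.logb 2 (Fintype.card α / δ) := by
  have hK : (0 : ℝ) < Fintype.card α := Nat.cast_pos.2 Fintype.card_pos
  have hδK : 0 < δ / Fintype.card α := div_pos hδ hK
  have ha (a c : α) : 0 ≤ if a = c then 1 - δ else 0 := by split_ifs <;> linarith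
  refine ⟨fun c a => (if a = c then 1 - δ else 0) + δ / Fintype.card α,
    fun c => ⟨fun a => add_nonneg (ha a c) hδK.le, ?_⟩,
    fun a c => ⟨(add_pos_of_nonneg_of_pos (ha a c) hδK).ne', ?_⟩⟩
  · rw [Finset.sum_add_distrib]
    simp [mul_div_cancel₀ _ hK.ne']
  · rcases eq_or_ne a c with rfl | hac
    · simpa [dHam] using Real.logb_le_logb_of_le one_lt_two (sub_pos.2 hδ1)
        (le_add_of_nonneg_right hδK.le)
    · have : Real.logb 2 (1 - δ) ≤ 0 := Real.logb_nonpos one_lt_two (by linarith) (by linarith)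
      simp only [dHam, if_neg hac, zero_add, one_mul, ← Real.logb_inv 2 (δ / _), inv_div]
      linarith

theorem condH_le_of_hamming (hp : IsPmf p) {m : ℕ} (hn : 0 < n)
    (f : (Fin n → α) × (Fin n → β) → Fin m) (g : Fin m × (Fin n → β) → Fin n → α)
    {δ : ℝ} (hδ : 0 < δ) (hδ1 : δ < 1) :
    condH p ≤ Real.logb 2 m / n - Real.logb 2 (1 - δ) +
      Delta1 p dHam f g * Real.logb 2 (Fintype.card α / δ) := by
  have hn' : (0 : ℝ) < n := Nat.cast_pos.2 hn
  obtain ⟨a₀, _⟩ := hp.nonempty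
  have : Nonempty α := ⟨a₀⟩
  obtain ⟨V, hV, hVle⟩ := exists_condPmf_neg_logb_le α hδ hδ1
  have hcode := mul_condH_le_of_code hp f g (V := fun bc => V bc.2) (fun bc => hV bc.2)
    fun ab _ i => (hVle _ _).1
  have sum_le (ab : (Fin n → α) × (Fin n → β)) :
      ∑ i, -Real.logb 2 (V (g (f ab, ab.2) i) (ab.1 i)) ≤ n * -Real.logb 2 (1 - δ) +
        (∑ i, dHam (ab.1 i) (g (f ab, ab.2) i)) * Real.logb 2 (Fintype.card α / δ) := by
    refine (Finset.sum_le_sum fun i _ => (hVle (ab.1 i) (g (f ab, ab.2) i)).2).trans_eq ?_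
    rw [Finset.sum_add_distrib, ← Finset.sum_mul]
    simp
  have hloss := Finset.sum_le_sum fun ab (_ : ab ∈ Finset.univ) =>
    mul_le_mul_of_nonneg_left (sum_le ab) ((hp.iid n).1 ab)
  have hDelta : n * Delta1 p dHam f g =
      ∑ ab, iid p n ab * ∑ i, dHam (ab.1 i) (g (f ab, ab.2) i) := by
    rw [Delta1, Finset.mul_sum]
    exact Finset.sum_congr rfl fun ab _ => by rw [mul_left_comm, mul_inv_cancel_left₀ hn'.ne']
  simp only [mul_add, Finset.sum_add_distrib, ← Finset.sum_mul, ← mul_assoc, (hp.iid n).2,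
    ← hDelta, one_mul] at hloss
  rw [Fintype.card_fin] at hcode
  refine le_of_mul_le_mul_left ?_ hn'
  rw [mul_add, mul_sub, mul_div_cancel₀ _ hn'.ne']
  linarith

theorem RDAchievable.condH_le {γ : Type} {δ2 : β → γ → ℝ} {d2 r : ℝ} (hp : IsPmf p)
    (h : RDAchievable p dHam δ2 0 d2 r) : condH p ≤ r := by
  obtain ⟨a₀, _⟩ := hp.nonempty
  have : Nonempty α := ⟨a₀⟩
  have hK : (1 : ℝ) ≤ Fintype.card α := Nat.one_le_cast.2 Fintype.card_pos
  set bound : ℝ → ℝ := fun ε => r + ε - Real.logb 2 (1 - ε) +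
    (ε * Real.logb 2 (Fintype.card α) - ε * Real.log ε / Real.log 2)
  have hbound : ContinuousAt bound 0 := by
    refine ContinuousAt.add (ContinuousAt.sub (by fun_prop) (ContinuousAt.logb (by fun_prop) ?_))
      (ContinuousAt.sub (by fun_prop) (Real.continuous_mul_log.continuousAt.div_const _))
    simp
  refine (ge_of_tendsto (hbound.tendsto.mono_left nhdsWithin_le_nhds : Tendsto bound (𝓝[>] 0) _)
    ?_).trans_eq (by simp [bound])
  filter_upwards [Ioo_mem_nhdsGT one_pos] with ε ⟨hε, hε1⟩
  obtain ⟨n, m, f, g1, g2, hn, hrate, h1, -⟩ := h ε hε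
  have hlog : 0 ≤ Real.logb 2 (Fintype.card α / ε) :=
    Real.logb_nonneg one_lt_two ((one_le_div hε).2 (hε1.le.trans hK))
  calc condH p ≤ r + ε - Real.logb 2 (1 - ε) + (0 + ε) * Real.logb 2 (Fintype.card α / ε) :=
        (condH_le_of_hamming hp hn f g1 hε hε1).trans <|
          add_le_add (sub_le_sub_right hrate _) (mul_le_mul_of_nonneg_right h1 hlog)
    _ = bound ε := by
        rw [Real.logb_div (zero_lt_one.trans_le hK).ne' hε.ne', zero_add, mul_sub]
        simp only [bound, Real.logb, mul_div_assoc]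

/-! ### The lossy receiver -/

/-- The law of `(Aᵢ, Bᵢ, Cᵢ)` at a uniformly random time `i`, where the blocks `(A, B)` have joint
law `P` and the block `C = c (A, B)` is a function of them. -/
def avgLaw (P : (Fin n → α) × (Fin n → β) → ℝ) (c : (Fin n → α) × (Fin n → β) → Fin n → γ) :
    α × β × γ → ℝ :=
  fun t => (n : ℝ)⁻¹ * ∑ i, prob P fun ab => (ab.1 i, ab.2 i, c ab i) = t

theorem avgLaw_nonneg {P : (Fin n → α) × (Fin n → β) → ℝ} (hP : ∀ ab, 0 ≤ P ab)
    (c : (Fin n → α) × (Fin n → β) → Fin n → γ) (t : α × β × γ) : 0 ≤ avgLaw P c t :=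
  mul_nonneg (by positivity) (Finset.sum_nonneg fun _ _ => prob_nonneg hP _)

theorem avgLaw_ne_zero {P : (Fin n → α) × (Fin n → β) → ℝ} (hP : ∀ ab, 0 ≤ P ab)
    (c : (Fin n → α) × (Fin n → β) → Fin n → γ) {ab : (Fin n → α) × (Fin n → β)}
    (hab : P ab ≠ 0) (i : Fin n) : avgLaw P c (ab.1 i, ab.2 i, c ab i) ≠ 0 := by
  refine mul_ne_zero (inv_ne_zero (Nat.cast_ne_zero.2 i.pos.ne')) (ne_of_gt ?_)
  refine Finset.sum_pos' (fun _ _ => prob_nonneg hP _) ⟨i, Finset.mem_univ i, ?_⟩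
  exact Finset.sum_pos' (fun ab _ => by split_ifs <;> simp [hP ab])
    ⟨ab, Finset.mem_univ ab, by simpa using (hP ab).lt_of_ne' hab⟩

variable [Fintype γ]

theorem sum_avgLaw_mul (P : (Fin n → α) × (Fin n → β) → ℝ)
    (c : (Fin n → α) × (Fin n → β) → Fin n → γ) (F : α × β × γ → ℝ) :
    ∑ t, avgLaw P c t * F t =
      ∑ ab, P ab * ((n : ℝ)⁻¹ * ∑ i, F (ab.1 i, ab.2 i, c ab i)) := by
  calc _ = (n : ℝ)⁻¹ * ∑ i, ∑ t, prob P (fun ab => (ab.1 i, ab.2 i, c ab i) = t) * F t := by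
        simp only [avgLaw, mul_assoc, ← Finset.mul_sum, Finset.sum_mul]
        rw [Finset.sum_comm]
    _ = (n : ℝ)⁻¹ * ∑ i, ∑ ab, P ab * F (ab.1 i, ab.2 i, c ab i) := by
        refine congrArg _ (Finset.sum_congr rfl fun i _ => ?_)
        simp only [prob, Finset.sum_mul]
        rw [Finset.sum_comm]
        simp
    _ = _ := by
        rw [Finset.sum_comm, Finset.mul_sum]
        exact Finset.sum_congr rfl fun ab _ => by rw [← Finset.mul_sum, mul_left_comm]

theorem sum_avgLaw_iid (hp : IsPmf p) (hn : 0 < n)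
    (c : (Fin n → α) × (Fin n → β) → Fin n → γ) :
    (fun t : α × β => ∑ k, avgLaw (iid p n) c (t.1, t.2, k)) = p := by
  funext ⟨a, b⟩
  have hn' : (n : ℝ) ≠ 0 := Nat.cast_ne_zero.2 hn.ne'
  have hmean := sum_iid_mul_sum (n := n) hp fun t => if t = (a, b) then 1 else 0
  have hsum := sum_avgLaw_mul (iid p n) c fun t => if (t.1, t.2.1) = (a, b) then 1 else 0
  simp only [mul_left_comm _ (n : ℝ)⁻¹, ← Finset.mul_sum, hmean, inv_mul_cancel_left₀ hn'] at hsum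
  calc ∑ k, avgLaw (iid p n) c (a, b, k) =
        ∑ t, avgLaw (iid p n) c t * if (t.1, t.2.1) = (a, b) then 1 else 0 := by
        simp only [Fintype.sum_prod_type, Prod.mk.injEq, ite_and, mul_ite, mul_one, mul_zero]
        rw [Finset.sum_eq_single a _ (by simp), Finset.sum_eq_single b _ (by simp)] <;>
          simp +contextual
    _ = p (a, b) := by simpa using hsum

theorem mul_condMI_avgLaw_le (hp : IsPmf p) (hn : 0 < n)
    (f : (Fin n → α) × (Fin n → β) → ℳ) (g : ℳ × (Fin n → β) → Fin n → γ) :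
    n * condMI (avgLaw (iid p n) fun ab => g (f ab, ab.2)) ≤ Real.logb 2 (Fintype.card ℳ) := by
  set c := fun ab : (Fin n → α) × (Fin n → β) => g (f ab, ab.2)
  have hn' : (n : ℝ) ≠ 0 := Nat.cast_ne_zero.2 hn.ne'
  have hP : ∀ t, 0 ≤ avgLaw (iid p n) c t := avgLaw_nonneg (hp.iid n).1 c
  obtain ⟨a₀, _⟩ := hp.nonempty
  have : Nonempty α := ⟨a₀⟩
  obtain ⟨V, hV, hVP⟩ := exists_posterior hP
  have hcode := mul_condH_le_of_code hp f g hV fun ab hab i =>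
    right_ne_zero_of_mul ((hVP _ _).trans_ne (avgLaw_ne_zero (hp.iid n).1 c hab i))
  have hloss : n * condH (avgLaw (iid p n) c) =
      ∑ ab, iid p n ab * ∑ i, -Real.logb 2 (V (ab.2 i, c ab i) (ab.1 i)) := by
    rw [condH_eq_sum_neg_logb hVP,
      sum_avgLaw_mul (F := fun t => -Real.logb 2 (V t.2 t.1)), Finset.mul_sum]
    exact Finset.sum_congr rfl fun ab _ => by rw [mul_left_comm, mul_inv_cancel_left₀ hn']
  rw [condMI_eq_condH_sub, sum_avgLaw_iid hp hn, mul_sub, hloss]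
  exact sub_le_iff_le_add.2 hcode

theorem exists_channel_of_code (hp : IsPmf p) {m : ℕ} (hn : 0 < n) (δ : α → γ → ℝ)
    (f : (Fin n → α) × (Fin n → β) → Fin m) (g : Fin m × (Fin n → β) → Fin n → γ) :
    ∃ W : α × β → γ → ℝ, IsCondPmf W ∧
      ∑ t, jointLaw p W t * δ t.1 t.2.2 = Delta1 p δ f g ∧
      condMI (jointLaw p W) ≤ Real.logb 2 m / n := by
  obtain ⟨ab₀⟩ := (hp.iid n).nonempty
  have : Nonempty γ := ⟨g (f ab₀, ab₀.2) ⟨0, hn⟩⟩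
  obtain ⟨W, hW, hPW⟩ :=
    exists_eq_jointLaw (avgLaw_nonneg (hp.iid n).1 fun ab => g (f ab, ab.2))
  rw [sum_avgLaw_iid hp hn] at hPW
  refine ⟨W, hW, ?_, ?_⟩
  · rw [← hPW, sum_avgLaw_mul (F := fun t => δ t.1 t.2.2)]
    rfl
  · rw [← hPW, le_div_iff₀' (Nat.cast_pos.2 hn)]
    simpa using mul_condMI_avgLaw_le hp hn f g

end Converse

section CondRD

variable {α β γ : Type} [Fintype α] [Fintype β] [Fintype γ] {p : α × β → ℝ}
  {δ : α → γ → ℝ} {d : ℝ}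

theorem isCompact_setOf_isCondPmf (α β : Type) [Fintype β] :
    IsCompact {W : α → β → ℝ | IsCondPmf W} := by
  have hset : {W : α → β → ℝ | IsCondPmf W} = Set.univ.pi fun _ => stdSimplex ℝ β := by
    ext W
    simp [IsCondPmf, IsPmf, stdSimplex]
  exact hset ▸ isCompact_univ_pi fun _ => isCompact_stdSimplex ℝ β

theorem continuous_H2 : Continuous (H2 (α := α)) := by
  have hterm : Continuous fun x : ℝ => x * Real.logb 2 x := by
    simpa only [Real.logb, ← mul_div_assoc] using Real.continuous_mul_log.div_const _
  exact (continuous_finsetSum _ fun a _ => hterm.comp (continuous_apply a)).neg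

theorem continuous_condMI_jointLaw (p : α × β → ℝ) :
    Continuous fun W : α × β → γ → ℝ => condMI (jointLaw p W) := by
  unfold condMI jointLaw
  refine ((Continuous.add ?_ ?_).sub ?_).sub ?_ <;>
    exact continuous_H2.comp (by fun_prop)

theorem continuous_sum_jointLaw_mul (p : α × β → ℝ) (δ : α → γ → ℝ) :
    Continuous fun W : α × β → γ → ℝ => ∑ t, jointLaw p W t * δ t.1 t.2.2 := by
  unfold jointLaw
  fun_prop

theorem condRD_eq_sInf (p : α × β → ℝ) (δ : α → γ → ℝ) (d : ℝ) :
    condRD p δ d = sInf ((fun W => condMI (jointLaw p W)) ''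
      {W | IsCondPmf W ∧ ∑ t, jointLaw p W t * δ t.1 t.2.2 ≤ d}) := by
  simp only [condRD, jointLaw, Fintype.sum_prod_type]
  congr 1
  ext r
  exact ⟨fun ⟨W, hW, hd, hr⟩ => ⟨W, ⟨hW, hd⟩, hr.symm⟩,
    fun ⟨W, ⟨hW, hd⟩, hr⟩ => ⟨W, hW, hd, hr.symm⟩⟩

theorem condRD_le_condMI {W : α × β → γ → ℝ} (hW : IsCondPmf W)
    (hd : ∑ t, jointLaw p W t * δ t.1 t.2.2 ≤ d) : condRD p δ d ≤ condMI (jointLaw p W) := by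
  rw [condRD_eq_sInf]
  have hbdd := ((isCompact_setOf_isCondPmf (α × β) γ).image
    (continuous_condMI_jointLaw p)).bddBelow
  exact csInf_le (hbdd.mono (Set.image_mono fun _ h => h.1)) ⟨W, ⟨hW, hd⟩, rfl⟩

theorem exists_condMI_lt_of_condRD_lt {r : ℝ} {W₀ : α × β → γ → ℝ} (hW₀ : IsCondPmf W₀)
    (hd : ∑ t, jointLaw p W₀ t * δ t.1 t.2.2 ≤ d) (hr : condRD p δ d < r) :
    ∃ W, IsCondPmf W ∧ ∑ t, jointLaw p W t * δ t.1 t.2.2 ≤ d ∧ condMI (jointLaw p W) < r := by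
  rw [condRD_eq_sInf] at hr
  obtain ⟨_, ⟨W, hW, rfl⟩, hlt⟩ := exists_lt_of_csInf_lt (by exact ⟨_, W₀, ⟨hW₀, hd⟩, rfl⟩) hr
  exact ⟨W, hW.1, hW.2, hlt⟩

theorem condRD_le_of_forall_pos {r : ℝ} (h : ∀ ε > 0, ∃ W : α × β → γ → ℝ, IsCondPmf W ∧
    ∑ t, jointLaw p W t * δ t.1 t.2.2 ≤ d + ε ∧ condMI (jointLaw p W) ≤ r + ε) :
    condRD p δ d ≤ r := by
  set excess : (α × β → γ → ℝ) → ℝ := fun W =>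
    max (∑ t, jointLaw p W t * δ t.1 t.2.2 - d) (condMI (jointLaw p W) - r)
  have hcont : Continuous excess := ((continuous_sum_jointLaw_mul p δ).sub continuous_const).max
    ((continuous_condMI_jointLaw p).sub continuous_const)
  obtain ⟨W₁, hW₁, -⟩ := h 1 one_pos
  obtain ⟨W, hW, hmin⟩ := (isCompact_setOf_isCondPmf (α × β) γ).exists_isMinOn ⟨W₁, hW₁⟩
    hcont.continuousOn
  have hexcess : excess W ≤ 0 := le_of_forall_pos_le_add fun ε hε => by
    obtain ⟨W', hW', hd', hr'⟩ := h ε hε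
    exact (hmin hW').trans <| max_le (by linarith) (by linarith)
  exact (condRD_le_condMI hW (sub_nonpos.1 ((le_max_left _ _).trans hexcess))).trans
    (sub_nonpos.1 ((le_max_right _ _).trans hexcess))

theorem RDAchievable.condRD_le {γ' : Type} {δ2 : β → γ' → ℝ} {d2 r : ℝ} (hp : IsPmf p)
    (h : RDAchievable p δ δ2 d d2 r) : condRD p δ d ≤ r := by
  refine condRD_le_of_forall_pos fun ε hε => ?_
  obtain ⟨n, m, f, g1, g2, hn, hrate, h1, -⟩ := h ε hε
  obtain ⟨W, hW, hdist, hMI⟩ := exists_channel_of_code hp hn δ f g1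
  exact ⟨W, hW, hdist.trans_le h1, hMI.trans hrate⟩

end CondRD

theorem RDAchievable.swap {α β γ γ' : Type} [Fintype α] [Fintype β] {p : α × β → ℝ}
    {δ1 : α → γ → ℝ} {δ2 : β → γ' → ℝ} {d1 d2 r : ℝ} (h : RDAchievable p δ1 δ2 d1 d2 r) :
    RDAchievable (swap p) δ2 δ1 d2 d1 r := by
  intro ε hε
  obtain ⟨n, m, f, g1, g2, hn, hrate, h1, h2⟩ := h ε hε
  refine ⟨n, m, fun ba => f ba.swap, g2, g1, hn, hrate, ?_, ?_⟩
  · exact ((Equiv.prodComm _ _).sum_comp _).trans_le h2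
  · exact ((Equiv.prodComm _ _).sum_comp _).trans_le h1

section Covering

theorem one_sub_pow_le {s t T : ℝ} (hs : s ≤ 1) (ht0 : 0 ≤ t) (ht1 : t ≤ 1) (hT : 0 < T)
    (hst : t ≤ T * s) (M : ℕ) : (1 - s) ^ M ≤ 1 - t + Real.exp (-(M / T)) := by
  have hs' : 1 - s ≤ Real.exp (-(t / T)) := by
    linarith [Real.one_sub_le_exp_neg (t / T), (div_le_iff₀' hT).2 hst]
  calc (1 - s) ^ M ≤ Real.exp (-(t / T)) ^ M := pow_le_pow_left₀ (sub_nonneg.2 hs) hs' M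
    _ = Real.exp ((1 - t) * 0 + t * -(M / T)) := by
        rw [← Real.exp_nat_mul]
        congr 1
        ring
    _ ≤ (1 - t) * Real.exp 0 + t * Real.exp (-(M / T)) :=
        convexOn_exp.2 (Set.mem_univ 0) (Set.mem_univ _) (sub_nonneg.2 ht1) ht0 (by ring)
    _ ≤ 1 - t + Real.exp (-(M / T)) := by
        rw [Real.exp_zero, mul_one]
        gcongr
        exact mul_le_of_le_one_left (Real.exp_pos _).le ht1

theorem sum_mul_prob_comm {α β : Type} [Fintype α] [Fintype β] (p : α → ℝ) (r : β → ℝ)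
    (E : α → β → Prop) :
    ∑ a, p a * prob r (E a) = ∑ b, r b * prob p fun a => E a b := by
  simp only [prob_eq_sum_mul, Finset.mul_sum]
  rw [Finset.sum_comm]
  simp only [mul_left_comm]

variable {α β γ : Type} [Fintype α] [Fintype γ] {T : ℝ}

theorem exists_codebook {μ : α → ℝ} (hμ : ∀ a, 0 ≤ μ a) {W : α → γ → ℝ} (hW : IsCondPmf W)
    {P : γ → ℝ} (hP : IsPmf P) {G : α → γ → Prop} (hT : 0 < T)
    (hG : ∀ a c, G a c → W a c ≤ T * P c) (M : ℕ) :
    ∃ c : Fin M → γ, prob μ (fun a => ∀ j, ¬ G a (c j)) ≤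
      ∑ a, μ a * (prob (W a) (fun c => ¬ G a c) + Real.exp (-(M / T))) := by
  refine (IsPmf.piPmf fun _ : Fin M => hP).exists_le_of_sum_mul_le ?_
  rw [sum_mul_prob_comm]
  refine Finset.sum_le_sum fun a _ => mul_le_mul_of_nonneg_left ?_ (hμ a)
  have prob_le : prob (W a) (G a) ≤ T * prob P (G a) := by
    rw [prob, prob, Finset.mul_sum]
    refine Finset.sum_le_sum fun c _ => ?_
    split_ifs with h
    · exact hG a c h
    · rw [mul_zero]
  calc prob (piPmf fun _ : Fin M => P) (fun c => ∀ j, ¬ G a (c j))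
      = (1 - prob P (G a)) ^ M := by
        rw [prob_piPmf_forall _ fun c => ¬ G a c, Finset.prod_const, hP.prob_not,
          Finset.card_univ, Fintype.card_fin]
    _ ≤ 1 - prob (W a) (G a) + Real.exp (-(M / T)) :=
        one_sub_pow_le (hP.prob_le_one _) (prob_nonneg (hW a).1 _) ((hW a).prob_le_one _) hT
          prob_le M
    _ = prob (W a) (fun c => ¬ G a c) + Real.exp (-(M / T)) := by rw [(hW a).prob_not]

theorem exists_conditional_codebook [Fintype β] {p : α × β → ℝ} (hp : IsPmf p)
    {W : α × β → γ → ℝ} (hW : IsCondPmf W) {Q : β → γ → ℝ} (hQ : IsCondPmf Q)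
    {G : α × β → γ → Prop} (hT : 0 < T) (hG : ∀ ab c, G ab c → W ab c ≤ T * Q ab.2 c) (M : ℕ) :
    ∃ c : β → Fin M → γ, prob p (fun ab => ∀ j, ¬ G ab (c ab.2 j)) ≤
      prob (jointLaw p W) (fun t => ¬ G (t.1, t.2.1) t.2.2) + Real.exp (-(M / T)) := by
  choose c hc using fun b => exists_codebook (fun a => hp.1 (a, b)) (fun a => hW (a, b)) (hQ b)
    hT (fun a c => hG (a, b) c) M
  refine ⟨c, ?_⟩
  calc prob p (fun ab => ∀ j, ¬ G ab (c ab.2 j))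
      = ∑ b, prob (fun a => p (a, b)) fun a => ∀ j, ¬ G (a, b) (c b j) :=
        Fintype.sum_prod_type_right _
    _ ≤ ∑ b, ∑ a, p (a, b) * (prob (W (a, b)) (fun c => ¬ G (a, b) c) + Real.exp (-(M / T))) :=
        Finset.sum_le_sum fun b _ => hc b
    _ = ∑ ab, p ab * prob (W ab) (fun c => ¬ G ab c) + Real.exp (-(M / T)) := by
        rw [← Fintype.sum_prod_type_right']
        simp only [mul_add, Finset.sum_add_distrib, ← Finset.sum_mul, hp.2, one_mul, Prod.mk.eta]
    _ = _ := by
        simp only [prob_eq_sum_mul (jointLaw p W), prob_eq_sum_mul (W _)]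
        rw [sum_jointLaw_mul]

end Covering

section Binning

theorem prob_exists_mem_le {α ι : Type} [Fintype α] {p : α → ℝ} (hp : ∀ a, 0 ≤ p a)
    (S : Finset ι) (E : ι → α → Prop) :
    prob p (fun a => ∃ i ∈ S, E i a) ≤ ∑ i ∈ S, prob p (E i) := by
  simp only [prob]
  rw [Finset.sum_comm]
  refine Finset.sum_le_sum fun a _ => ?_
  have hnonneg (i : ι) : 0 ≤ if E i a then p a else 0 := by split_ifs <;> simp [hp a]
  split_ifs with h
  · obtain ⟨i, hi, hE⟩ := h
    exact (if_pos hE).symm.trans_le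
      (Finset.single_le_sum (f := fun i => if E i a then p a else 0) (fun i _ => hnonneg i) hi)
  · exact Finset.sum_nonneg fun i _ => hnonneg i

theorem IsPmf.uniform (α : Type) [Fintype α] [Nonempty α] :
    IsPmf fun _ : α => (Fintype.card α : ℝ)⁻¹ :=
  ⟨fun _ => by positivity, by simp⟩

variable {α Z : Type} [Fintype α] [Fintype Z] [AddCommGroup Z]

theorem prob_uniform_sub_eq {a a' : α} (hne : a ≠ a') (z : Z) :
    prob (fun _ : α → Z => (Fintype.card (α → Z) : ℝ)⁻¹) (fun h => h a' - h a = z) =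
      (Fintype.card Z : ℝ)⁻¹ := by
  set u : (α → Z) → ℝ := fun _ => (Fintype.card (α → Z) : ℝ)⁻¹
  set diff : (α → Z) →+ Z := Pi.evalAddMonoidHom (fun _ => Z) a' - Pi.evalAddMonoidHom _ a
  have hsurj : Function.Surjective diff := fun z => ⟨Pi.single a' z, by simp [diff, hne]⟩
  have prob_fiber_eq (z' : Z) : prob u (fun h => diff h = z') = prob u (fun h => diff h = z) := by
    simp only [prob, ← Finset.sum_filter, u, Finset.sum_const]
    rw [AddMonoidHom.card_fiber_eq_of_mem_range diff (Set.mem_range.2 (hsurj z'))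
      (Set.mem_range.2 (hsurj z))]
  have htotal : ∑ z', prob u (fun h => diff h = z') = 1 := by
    refine .trans ?_ (IsPmf.uniform (α → Z)).2
    simp only [prob]
    rw [Finset.sum_comm]
    simp [u]
  rw [Finset.sum_congr rfl fun z' _ => prob_fiber_eq z', Finset.sum_const, Finset.card_univ,
    nsmul_eq_mul] at htotal
  exact eq_inv_of_mul_eq_one_right htotal

variable {β : Type} [Fintype β] {p : α × β → ℝ}

theorem exists_hash (hp : IsPmf p) (S : β → Finset α) {K : ℝ} (hS : ∀ b, ((S b).card : ℝ) ≤ K)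
    (k : α × β → Z) :
    ∃ h : α → Z, prob p (fun ab => ab.1 ∉ S ab.2 ∨
        ∃ a ∈ (S ab.2).erase ab.1, h a + k (a, ab.2) = h ab.1 + k ab) ≤
      prob p (fun ab => ab.1 ∉ S ab.2) + K / Fintype.card Z := by
  set u : (α → Z) → ℝ := fun _ => (Fintype.card (α → Z) : ℝ)⁻¹
  have hu : IsPmf u := IsPmf.uniform _
  have hK : 0 ≤ K / Fintype.card Z := by
    obtain ⟨⟨_, b⟩⟩ := hp.nonempty
    exact div_nonneg ((Nat.cast_nonneg _).trans (hS b)) (Nat.cast_nonneg _)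
  have prob_collision_le (ab : α × β) : prob u (fun h =>
      ∃ a ∈ (S ab.2).erase ab.1, h a + k (a, ab.2) = h ab.1 + k ab) ≤ K / Fintype.card Z := by
    refine (prob_exists_mem_le hu.1 _ fun a h => h a + k (a, ab.2) = h ab.1 + k ab).trans ?_
    calc ∑ a ∈ (S ab.2).erase ab.1, prob u (fun h => h a + k (a, ab.2) = h ab.1 + k ab)
        = ∑ _ ∈ (S ab.2).erase ab.1, (Fintype.card Z : ℝ)⁻¹ := by
          refine Finset.sum_congr rfl fun a ha => ?_
          rw [← prob_uniform_sub_eq (Finset.ne_of_mem_erase ha).symm (k ab - k (a, ab.2))]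
          congr
          ext h
          rw [sub_eq_sub_iff_add_eq_add, add_comm (k ab)]
      _ ≤ K / Fintype.card Z := by
          rw [Finset.sum_const, nsmul_eq_mul, ← div_eq_mul_inv]
          gcongr
          exact (Nat.cast_le.2 Finset.card_erase_le).trans (hS ab.2)
  refine hu.exists_le_of_sum_mul_le ?_
  rw [sum_mul_prob_comm]
  calc _ ≤ ∑ ab, p ab * ((if ab.1 ∉ S ab.2 then 1 else 0) + K / Fintype.card Z) := by
        refine Finset.sum_le_sum fun ab _ => mul_le_mul_of_nonneg_left ?_ (hp.1 ab)
        by_cases hmem : ab.1 ∈ S ab.2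
        · simpa only [hmem, not_true, false_or, if_false, zero_add] using prob_collision_le ab
        · rw [if_pos hmem]
          exact (hu.prob_le_one _).trans (le_add_of_nonneg_right hK)
    _ = _ := by
        simp only [mul_add, Finset.sum_add_distrib, ← Finset.sum_mul, hp.2, one_mul]
        rw [prob_eq_sum_mul]
        congr!

theorem exists_hash_decoder (hp : IsPmf p) (S : β → Finset α) {K : ℝ}
    (hS : ∀ b, ((S b).card : ℝ) ≤ K) (k : α × β → Z) :
    ∃ (h : α → Z) (dec : Z × β → α), prob p (fun ab => dec (h ab.1 + k ab, ab.2) ≠ ab.1) ≤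
      prob p (fun ab => ab.1 ∉ S ab.2) + K / Fintype.card Z := by
  obtain ⟨h, hh⟩ := exists_hash hp S hS k
  obtain ⟨a₀, _⟩ := hp.nonempty
  have : Nonempty α := ⟨a₀⟩
  set dec : Z × β → α := fun zb =>
    Classical.epsilon fun a => a ∈ S zb.2 ∧ h a + k (a, zb.2) = zb.1
  refine ⟨h, dec, (prob_mono hp.1 fun ab _ hne => ?_).trans hh⟩
  refine or_iff_not_imp_left.2 fun hmem => ⟨dec (h ab.1 + k ab, ab.2), ?_⟩
  have hdec := Classical.epsilon_spec
    (p := fun a => a ∈ S ab.2 ∧ h a + k (a, ab.2) = h ab.1 + k ab) ⟨ab.1, not_not.1 hmem, rfl⟩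
  exact ⟨Finset.mem_erase.2 ⟨hne, hdec.1⟩, hdec.2⟩

theorem IsPmf.card_filter_one_le_mul {v : α → ℝ} (hv : IsPmf v) {K : ℝ} (hK : 0 ≤ K) :
    ((Finset.univ.filter fun a => 1 ≤ K * v a).card : ℝ) ≤ K := by
  calc ((Finset.univ.filter fun a => 1 ≤ K * v a).card : ℝ)
      = ∑ a with 1 ≤ K * v a, (1 : ℝ) := by simp
    _ ≤ ∑ a with 1 ≤ K * v a, K * v a :=
        Finset.sum_le_sum fun a ha => (Finset.mem_filter.1 ha).2
    _ ≤ ∑ a, K * v a := Finset.sum_le_univ_sum_of_nonneg fun a => mul_nonneg hK (hv.1 a)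
    _ = K := by rw [← Finset.mul_sum, hv.2, mul_one]

end Binning

section BlockCodes

variable {α β γ : Type} [Fintype α] [Fintype β] {p : α × β → ℝ} {R η : ℝ}

theorem tendsto_two_rpow_neg_mul {ε : ℝ} (hε : 0 < ε) :
    Tendsto (fun n : ℕ => (2 : ℝ) ^ (-(n * ε))) atTop (𝓝 0) := by
  refine (tendsto_pow_atTop_nhds_zero_of_lt_one (r := (2 : ℝ) ^ (-ε)) (by positivity)
    (Real.rpow_lt_one_of_one_lt_of_neg one_lt_two (neg_lt_zero.2 hε))).congr fun n => ?_
  rw [← Real.rpow_mul_natCast two_pos.le]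
  congr 1
  ring

theorem two_rpow_div_le {n : ℕ} {R' c : ℝ} (hc : (2 : ℝ) ^ (n * R) ≤ c) :
    (2 : ℝ) ^ (n * R') / c ≤ 2 ^ (-(n * (R - R'))) := by
  calc (2 : ℝ) ^ (n * R') / c ≤ 2 ^ (n * R') / 2 ^ (n * R) := by gcongr
    _ = 2 ^ (-(n * (R - R'))) := by
        rw [← Real.rpow_sub two_pos]
        congr 1
        ring

theorem eventually_exists_hash_decoder (hp : IsPmf p) (hR : condH p < R) (hη : 0 < η) :
    ∀ᶠ n : ℕ in atTop, ∀ (Z : Type) [Fintype Z] [AddCommGroup Z],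
      (2 : ℝ) ^ (n * R) ≤ Fintype.card Z → ∀ k : (Fin n → α) × (Fin n → β) → Z,
        ∃ (h : (Fin n → α) → Z) (dec : Z × (Fin n → β) → Fin n → α),
          prob (iid p n) (fun ab => dec (h ab.1 + k ab, ab.2) ≠ ab.1) ≤ η := by
  obtain ⟨a₀, _⟩ := hp.nonempty
  have : Nonempty α := ⟨a₀⟩
  obtain ⟨R', hR', hlt⟩ := exists_between hR
  obtain ⟨V, hV, hVp⟩ := exists_posterior hp.1
  rw [condH_eq_sum_neg_logb hVp] at hR'
  filter_upwards [(hp.tendsto_prob_iid_lt_sum hR').eventually_lt_const (half_pos hη),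
    (tendsto_two_rpow_neg_mul (sub_pos.2 hlt)).eventually_lt_const (half_pos hη)]
    with n hatypical htail Z _ _ hZ k
  set K : ℝ := 2 ^ (n * R')
  have hK : 0 < K := by positivity
  set S : (Fin n → β) → Finset (Fin n → α) := fun b =>
    Finset.univ.filter fun a => 1 ≤ K * piPmf (fun i => V (b i)) a
  have hS (b) : ((S b).card : ℝ) ≤ K :=
    (IsPmf.piPmf fun i => hV (b i)).card_filter_one_le_mul hK.le
  obtain ⟨h, dec, hdec⟩ := exists_hash_decoder (hp.iid n) S hS k
  have prob_not_mem_le : prob (iid p n) (fun ab => ab.1 ∉ S ab.2) ≤ η / 2 := by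
    refine (prob_mono (hp.iid n).1 fun ab hab hmem => ?_).trans hatypical.le
    have hne (i : Fin n) : V (ab.2 i) (ab.1 i) ≠ 0 :=
      right_ne_zero_of_mul ((hVp _ _).trans_ne (apply_ne_zero_of_iid_ne_zero hab.ne' i))
    have hpos : 0 < piPmf (fun i => V (ab.2 i)) ab.1 :=
      Finset.prod_pos fun i _ => ((hV _).1 _).lt_of_ne' (hne i)
    have hlog := Real.logb_neg one_lt_two (mul_pos hK hpos) (by simpa [S] using hmem)
    rw [Real.logb_mul hK.ne' hpos.ne', logb_piPmf hne, Real.logb_rpow two_pos (by norm_num)] at hlog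
    rw [Finset.sum_neg_distrib]
    linarith
  exact ⟨h, dec, by linarith [two_rpow_div_le (R' := R') hZ]⟩

variable [Fintype γ] {W : α × β → γ → ℝ}

theorem exists_output_condPmf (hp : IsPmf p) (hW : IsCondPmf W) : ∃ Q : β → γ → ℝ, IsCondPmf Q ∧
    ∀ c b, margY p b * Q b c = ∑ a, jointLaw p W (a, b, c) := by
  obtain ⟨_, _, c₀⟩ := (hp.jointLaw hW).nonempty
  have : Nonempty γ := ⟨c₀⟩
  obtain ⟨Q, hQ, hQp⟩ := exists_posterior (p := fun t : γ × β => ∑ a, jointLaw p W (a, t.2, t.1))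
    fun t => Finset.sum_nonneg fun a _ => (hp.jointLaw hW).1 _
  refine ⟨Q, hQ, fun c b => ?_⟩
  rw [← hQp]
  congr 1
  simp only [margY]
  rw [Finset.sum_comm]
  simp only [jointLaw, ← Finset.mul_sum, (hW _).2, mul_one]

theorem prob_mul_piPmf_lt_blockChannel_le (hp : IsPmf p) (hW : IsCondPmf W) {Q : β → γ → ℝ}
    (hQ : IsCondPmf Q) (hQp : ∀ c b, margY p b * Q b c = ∑ a, jointLaw p W (a, b, c)) (n : ℕ)
    (R : ℝ) :
    prob (jointLaw (iid p n) (blockChannel W n)) (fun t => (2 : ℝ) ^ (n * R) *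
        piPmf (fun i => Q (t.2.1 i)) t.2.2 < blockChannel W n (t.1, t.2.1) t.2.2) ≤
      prob (jointLaw (iid p n) (blockChannel W n)) fun t => n * R < ∑ i,
        (Real.logb 2 (W (t.1 i, t.2.1 i) (t.2.2 i)) - Real.logb 2 (Q (t.2.1 i) (t.2.2 i))) := by
  refine prob_mono ((hp.iid n).jointLaw (hW.blockChannel n)).1 fun t ht hlt => ?_
  have hne (i : Fin n) : 0 < jointLaw p W (t.1 i, t.2.1 i, t.2.2 i) :=
    ((hp.jointLaw hW).1 _).lt_of_ne' <|
      Finset.prod_ne_zero_iff.1 ((jointLaw_iid_apply p W t).symm.trans_ne ht.ne') i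
        (Finset.mem_univ i)
  have hWne (i : Fin n) : W (t.1 i, t.2.1 i) (t.2.2 i) ≠ 0 := right_ne_zero_of_mul (hne i).ne'
  have hQne (i : Fin n) : Q (t.2.1 i) (t.2.2 i) ≠ 0 := by
    refine right_ne_zero_of_mul (a := margY p (t.2.1 i)) ?_
    rw [hQp]
    exact (Finset.sum_pos' (f := fun a => jointLaw p W (a, t.2.1 i, t.2.2 i))
      (fun a _ => (hp.jointLaw hW).1 _) ⟨t.1 i, Finset.mem_univ _, hne i⟩).ne'
  have hQpos : 0 < piPmf (fun i => Q (t.2.1 i)) t.2.2 :=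
    Finset.prod_pos fun i _ => ((hQ _).1 _).lt_of_ne' (hQne i)
  have hlog := Real.logb_lt_logb one_lt_two (by positivity) hlt
  rw [Real.logb_mul (by positivity) hQpos.ne', Real.logb_rpow two_pos (by norm_num),
    logb_piPmf hQne, blockChannel, logb_piPmf hWne] at hlog
  rw [Finset.sum_sub_distrib]
  linarith

theorem eventually_exists_codebook (hp : IsPmf p) (hW : IsCondPmf W) {δ : α → γ → ℝ} {D : ℝ}
    (hR : condMI (jointLaw p W) < R) (hD : ∑ t, jointLaw p W t * δ t.1 t.2.2 < D) (hη : 0 < η) :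
    ∀ᶠ n : ℕ in atTop, ∀ m : ℕ, (2 : ℝ) ^ (n * R) ≤ m →
      ∃ c : (Fin n → β) → Fin m → Fin n → γ,
        prob (iid p n) (fun ab => ∀ j, ¬ ∑ i, δ (ab.1 i) (c ab.2 j i) ≤ n * D) ≤ η := by
  obtain ⟨Q, hQ, hQp⟩ := exists_output_condPmf hp hW
  obtain ⟨R', hR', hlt⟩ := exists_between hR
  rw [condMI_jointLaw hp hW hQp] at hR'
  have hη3 : 0 < η / 3 := by linarith
  filter_upwards [(tendsto_prob_jointLaw_iid_lt_sum hp hW hR').eventually_lt_const hη3,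
    (tendsto_prob_jointLaw_iid_lt_sum hp hW (F := fun t => δ t.1 t.2.2) hD).eventually_lt_const
      hη3,
    (tendsto_two_rpow_neg_mul (sub_pos.2 hlt)).eventually_lt_const hη3]
    with n hinfo hdist htail m hm
  set T : ℝ := 2 ^ (n * R')
  have hT : 0 < T := by positivity
  have hm0 : (0 : ℝ) < m := lt_of_lt_of_le (by positivity) hm
  obtain ⟨c, hc⟩ := exists_conditional_codebook (hp.iid n) (hW.blockChannel n)
    (Q := fun b => piPmf fun i => Q (b i)) (fun b => .piPmf fun i => hQ (b i))
    (G := fun ab c => ∑ i, δ (ab.1 i) (c i) ≤ n * D ∧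
      blockChannel W n ab c ≤ T * piPmf (fun i => Q (ab.2 i)) c) hT (fun ab c h => h.2) m
  have hexp : Real.exp (-(m / T)) ≤ T / m := by
    calc Real.exp (-(m / T)) = (Real.exp (m / T))⁻¹ := Real.exp_neg _
      _ ≤ (m / T)⁻¹ := inv_anti₀ (div_pos hm0 hT) (by linarith [Real.add_one_le_exp (m / T)])
      _ = T / m := inv_div _ _
  refine ⟨c, ?_⟩
  calc _ ≤ _ := prob_mono (hp.iid n).1 fun ab _ h j hj => h j hj.1
    _ ≤ _ := hc
    _ ≤ _ + _ + T / m := add_le_add (prob_le_add ((hp.iid n).jointLaw (hW.blockChannel n)).1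
        fun t _ ht => (not_and_or.1 ht).imp lt_of_not_ge lt_of_not_ge) hexp
    _ ≤ η / 3 + η / 3 + η / 3 := add_le_add (add_le_add hdist.le
        ((prob_mul_piPmf_lt_blockChannel_le hp hW hQ hQp n R').trans hinfo.le))
        ((two_rpow_div_le hm).trans htail.le)
    _ = η := by ring

theorem eventually_exists_code {q : α × β → ℝ} (hq : IsPmf q) {W : β × α → γ → ℝ}
    (hW : IsCondPmf W) {δ : β → γ → ℝ} {D : ℝ} (hH : condH q < R)
    (hI : condMI (jointLaw (swap q) W) < R)
    (hD : ∑ t, jointLaw (swap q) W t * δ t.1 t.2.2 < D) (hη : 0 < η) :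
    ∀ᶠ n : ℕ in atTop, ∀ (m : ℕ) [NeZero m], (2 : ℝ) ^ (n * R) ≤ m →
      ∃ (h : (Fin n → α) → Fin m) (k : (Fin n → α) × (Fin n → β) → Fin m)
        (dec : Fin m × (Fin n → β) → Fin n → α) (c : (Fin n → α) → Fin m → Fin n → γ),
        prob (iid q n) (fun ab => dec (h ab.1 + k ab, ab.2) ≠ ab.1) ≤ η ∧
        prob (iid q n) (fun ab => n * D < ∑ i, δ (ab.2 i) (c ab.1 (k ab) i)) ≤ η := by
  filter_upwards [eventually_exists_hash_decoder hq hH hη,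
    eventually_exists_codebook hq.swap hW hI hD hη] with n hhash hcover m _ hm
  obtain ⟨c, hc⟩ := hcover m hm
  rw [prob_iid_swap] at hc
  set k : (Fin n → α) × (Fin n → β) → Fin m := fun ab =>
    Classical.epsilon fun j => ∑ i, δ (ab.2 i) (c ab.1 j i) ≤ n * D
  obtain ⟨h, dec, hdec⟩ := hhash (Fin m) (by rwa [Fintype.card_fin]) k
  refine ⟨h, k, dec, c, hdec, (prob_mono (hq.iid n).1 fun ab _ hlt j hj => ?_).trans hc⟩
  exact hlt.not_ge (Classical.epsilon_spec
    (p := fun j => ∑ i, δ (ab.2 i) (c ab.1 j i) ≤ n * D) ⟨j, hj⟩)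

end BlockCodes

section Achievability

variable {α β γ : Type} [Fintype α] [Fintype β] [Fintype γ]

theorem eventually_exists_card {R r : ℝ} (hR : 0 ≤ R) (hr : R < r) :
    ∀ᶠ n : ℕ in atTop, ∃ m : ℕ, NeZero m ∧ (2 : ℝ) ^ (n * R) ≤ m ∧ Real.logb 2 m / n ≤ r := by
  have hlarge := (tendsto_natCast_atTop_atTop (R := ℝ)).eventually_ge_atTop (r - R)⁻¹
  filter_upwards [hlarge, eventually_gt_atTop 0] with n hn hn0
  have hn0' : (0 : ℝ) < n := Nat.cast_pos.2 hn0
  have one_le : (1 : ℝ) ≤ 2 ^ (n * R) := Real.one_le_rpow one_le_two (by positivity)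
  have hm : (2 : ℝ) ^ (n * R) ≤ ⌈(2 : ℝ) ^ (n * R)⌉₊ := Nat.le_ceil _
  have hm0 : (0 : ℝ) < ⌈(2 : ℝ) ^ (n * R)⌉₊ := by linarith
  refine ⟨_, ⟨Nat.cast_ne_zero.1 hm0.ne'⟩, hm, ?_⟩
  have hlog : Real.logb 2 ⌈(2 : ℝ) ^ (n * R)⌉₊ ≤ n * R + 1 := by
    rw [Real.logb_le_iff_le_rpow one_lt_two hm0, Real.rpow_add_one two_ne_zero]
    linarith [Nat.ceil_lt_add_one (zero_le_one.trans one_le)]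
  rw [inv_le_iff_one_le_mul₀ (sub_pos.2 hr)] at hn
  rw [div_le_iff₀ hn0']
  linarith

theorem sum_ite_zero_eq_prob_not (p : α → ℝ) (E : α → Prop) [DecidablePred E] :
    (∑ a, if E a then 0 else p a) = prob p fun a => ¬ E a :=
  Finset.sum_congr rfl fun a _ => by by_cases h : E a <;> simp [h]

theorem Delta1_dHam_le {q : α × β → ℝ} (hq : IsPmf q) {n m : ℕ} (hn : 0 < n)
    (f : (Fin n → α) × (Fin n → β) → Fin m) (g : Fin m × (Fin n → β) → Fin n → α) :
    Delta1 q dHam f g ≤ prob (iid q n) fun ab => ab.1 ≠ g (f ab, ab.2) := by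
  have average_le := (hq.iid n).sum_mul_average_le hn (d := 0) (B := 1)
    (F := fun ab i => dHam (ab.1 i) (g (f ab, ab.2) i)) fun ab i => by
      unfold dHam
      split_ifs <;> norm_num
  rw [zero_add, one_mul] at average_le
  refine average_le.trans (prob_mono (hq.iid n).1 fun ab _ hpos heq => ?_)
  simp [← heq, dHam] at hpos

theorem exists_common_code {q : α × β → ℝ} (hq : IsPmf q) {W : β × α → γ → ℝ} (hW : IsCondPmf W)
    {δ : β → γ → ℝ} {R r D η : ℝ} (hH : condH q < R) (hI : condMI (jointLaw (swap q) W) < R)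
    (hD : ∑ t, jointLaw (swap q) W t * δ t.1 t.2.2 < D) (hr : R < r) (hη : 0 < η) :
    ∃ (n m : ℕ) (f : (Fin n → α) × (Fin n → β) → Fin m) (g₁ : Fin m × (Fin n → β) → Fin n → α)
      (g₂ : Fin m × (Fin n → α) → Fin n → γ) (φ₁ : Fin m × (Fin n → β) → Fin n → γ),
      0 < n ∧ Real.logb 2 m / n ≤ r ∧
      prob (iid q n) (fun ab => ab.1 ≠ g₁ (f ab, ab.2)) ≤ η ∧
      prob (iid q n) (fun ab => φ₁ (f ab, ab.2) ≠ g₂ (f ab, ab.1)) ≤ η ∧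
      prob (iid q n) (fun ab => n * D < ∑ i, δ (ab.2 i) (g₂ (f ab, ab.1) i)) ≤ η := by
  have hR : 0 ≤ R := (condH_nonneg hq).trans hH.le
  obtain ⟨n, hcode, ⟨m, _, hm, hrate⟩, hn⟩ := ((eventually_exists_code hq hW hH hI hD hη).and
    ((eventually_exists_card hR hr).and (eventually_gt_atTop 0))).exists
  obtain ⟨h, k, dec, c, hdec, hdist⟩ := hcode m hm
  refine ⟨n, m, fun ab => h ab.1 + k ab, dec, fun ja => c ja.2 (ja.1 - h ja.2),
    fun jb => c (dec jb) (jb.1 - h (dec jb)), hn, hrate, ?_, ?_, ?_⟩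
  · simpa only [ne_comm] using hdec
  · refine (prob_mono (hq.iid n).1 fun ab _ hne hcorrect => hne ?_).trans hdec
    simp only [hcorrect]
  · simpa only [add_sub_cancel_left] using hdist

theorem CRAchievable.of_condH_le_of_condRD_le {q : α × β → ℝ} (hq : IsPmf q) {δ : β → γ → ℝ}
    {d r : ℝ} {W₀ : β × α → γ → ℝ} (hW₀ : IsCondPmf W₀)
    (hd : ∑ t, jointLaw (TWR.swap q) W₀ t * δ t.1 t.2.2 ≤ d) (hH : condH q ≤ r)
    (hI : condRD (TWR.swap q) δ d ≤ r) : CRAchievable q dHam δ 0 d r := by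
  intro ε hε
  have hε2 : r < r + ε / 2 := by linarith
  obtain ⟨W, hW, hWd, hWI⟩ := exists_condMI_lt_of_condRD_lt hW₀ hd (hI.trans_lt hε2)
  obtain ⟨C, hC⟩ := (Set.finite_range fun t : β × γ => δ t.1 t.2).bddAbove
  have hδ (b : β) (c : γ) : δ b c ≤ C := hC ⟨(b, c), rfl⟩
  set B : ℝ := max 1 (C - (d + ε / 2))
  have hB : 0 < B := zero_lt_one.trans_le (le_max_left _ _)
  have hB₁ : 1 ≤ B := le_max_left _ _
  have hB₂ : C - (d + ε / 2) ≤ B := le_max_right _ _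
  obtain ⟨n, m, f, g₁, g₂, φ₁, hn, hrate, hlossless, hcommon, hlossy⟩ :=
    exists_common_code (δ := δ) (D := d + ε / 2) (r := r + ε) (η := ε / (2 * B)) hq hW
      (hH.trans_lt hε2) hWI (by linarith) (by linarith) (by positivity)
  have hηB : B * (ε / (2 * B)) = ε / 2 := by field_simp
  have hηε : ε / (2 * B) ≤ ε := div_le_self hε.le (by linarith)
  have Delta2_le : Delta2 q δ f g₂ ≤ d + ε := by
    refine ((hq.iid n).sum_mul_average_le hn (d := d + ε / 2) (B := B)
      (F := fun ab i => δ (ab.2 i) (g₂ (f ab, ab.1) i)) fun ab i => ?_).trans ?_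
    · linarith [hδ (ab.2 i) (g₂ (f ab, ab.1) i)]
    linarith [mul_le_mul_of_nonneg_left hlossy hB.le]
  refine ⟨n, m, f, g₁, g₂, φ₁, fun ja => ja.2, hn, hrate, ?_, Delta2_le, ?_, ?_⟩
  · rw [zero_add]
    exact (Delta1_dHam_le hq hn f g₁).trans (hlossless.trans hηε)
  · exact (sum_ite_zero_eq_prob_not _ _).trans_le (hlossless.trans hηε)
  · exact (sum_ite_zero_eq_prob_not _ _).trans_le (hcommon.trans hηε)

theorem CRAchievable.rdAchievable {β' γ' : Type} {p : α × β → ℝ} {δ₁ : α → γ' → ℝ}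
    {δ₂ : β → β' → ℝ} {d₁ d₂ r : ℝ} (h : CRAchievable p δ₁ δ₂ d₁ d₂ r) :
    RDAchievable p δ₁ δ₂ d₁ d₂ r := fun ε hε =>
  let ⟨n, m, f, g₁, g₂, _, _, hn, hrate, h₁, h₂, _⟩ := h ε hε
  ⟨n, m, f, g₁, g₂, hn, hrate, h₁, h₂⟩

theorem exists_condPmf_sum_jointLaw_mul_eq_zero (p : α × β → ℝ) {δ : α → γ → ℝ}
    (hδ : ∀ a, ∃ c, δ a c = 0) :
    ∃ W : α × β → γ → ℝ, IsCondPmf W ∧ ∑ t, jointLaw p W t * δ t.1 t.2.2 = 0 := by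
  choose c hc using hδ
  refine ⟨fun t c' => if c' = c t.1 then 1 else 0, fun t => ⟨fun c' => ?_, ?_⟩, ?_⟩
  · dsimp only
    split_ifs <;> norm_num
  · simp
  · rw [sum_jointLaw_mul p _ fun t => δ t.1 t.2.2]
    simp [hc]

end Achievability

end TWR

open TWR in
theorem rd_one_lossless_general {α β γ : Type} [Fintype α] [Fintype β] [Fintype γ]
    {q : α × β → ℝ} (hq : IsPmf q) {δ : β → γ → ℝ} {d : ℝ}
    (hd : ∃ W : β × α → γ → ℝ, IsCondPmf W ∧ ∑ t, jointLaw (swap q) W t * δ t.1 t.2.2 ≤ d) :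
    RD q dHam δ 0 d = CRRD q dHam δ 0 d ∧
    RD q dHam δ 0 d = max (condH q) (condRD (swap q) δ d) := by
  obtain ⟨W, hW, hWd⟩ := hd
  have nonneg : 0 ≤ max (condH q) (condRD (swap q) δ d) := (condH_nonneg hq).trans (le_max_left _ _)
  have achievable : CRAchievable q dHam δ 0 d (max (condH q) (condRD (swap q) δ d)) :=
    .of_condH_le_of_condRD_le hq hW hWd (le_max_left _ _) (le_max_right _ _)
  have converse {r : ℝ} (h : RDAchievable q dHam δ 0 d r) :
      max (condH q) (condRD (swap q) δ d) ≤ r :=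
    max_le (h.condH_le hq) (h.swap.condRD_le hq.swap)
  have hRD : RD q dHam δ 0 d = max (condH q) (condRD (swap q) δ d) :=
    IsLeast.csInf_eq ⟨⟨nonneg, achievable.rdAchievable⟩, fun r hr => converse hr.2⟩
  have hCR : CRRD q dHam δ 0 d = max (condH q) (condRD (swap q) δ d) :=
    IsLeast.csInf_eq ⟨⟨nonneg, achievable⟩, fun r hr => converse hr.2.rdAchievable⟩
  exact ⟨hRD.trans hCR.symm, hRD⟩

open TWR in
/-- Corollary 5: if `δ1` is a Hamming distortion measure,
then `R(0,d2) = R_CR(0,d2) = max{H(X|Y), R_{Y|X}(d2)}`. -/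
theorem rd_one_lossless
    {𝒳 𝒴 Yh : Type} [Fintype 𝒳] [Fintype 𝒴] [Fintype Yh]
    (q : 𝒳 × 𝒴 → ℝ) (hq : IsPmf q)
    (δ2 : 𝒴 → Yh → ℝ) (d2max : ℝ)
    (hδ2 : ∀ y yh, 0 ≤ δ2 y yh ∧ δ2 y yh ≤ d2max)
    (hδ2n : ∀ y, ∃ yh, δ2 y yh = 0)
    (d2 : ℝ) (hd2 : 0 ≤ d2) :
    RD q (dHam (α := 𝒳)) δ2 0 d2 = CRRD q (dHam (α := 𝒳)) δ2 0 d2 ∧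
    RD q (dHam (α := 𝒳)) δ2 0 d2 = max (condH q) (condRD (swap q) δ2 d2) :=
  have ⟨W, hW, h0⟩ := exists_condPmf_sum_jointLaw_mul_eq_zero (swap q) hδ2n
  rd_one_lossless_general hq ⟨W, hW, h0.trans_le hd2⟩
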